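/- arXiv:2301.12924 — 5 statements merged into one kernel-verified Lean document; each statement's English description precedes it below -/
import Mathlib

section
/- For every real number ε with 0 < ε ≤ 1/2 and every finite simple 2-degenerate graph G with maximum degree Δ, if Δ ≥ 4^(1/(2ε)), then the strong chromatic index of G satisfies χ'_s(G) ≤ 5Δ − Δ^(1/2−ε) + 2. -/
open Classical

/-- A strong edge-coloring of `G` with colors in `Fin n`: any two distinct edges that share
an endpoint, or whose endpoints are joined by an edge of `G`, receive different colors. -/
def SimpleGraph.IsStrongEdgeColoring {V : Type*} (G : SimpleGraph V) {n : ℕ}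
    (C : G.edgeSet → Fin n) : Prop :=
  ∀ e f : G.edgeSet, e ≠ f →
    (∃ x ∈ (e : Sym2 V), ∃ y ∈ (f : Sym2 V), x = y ∨ G.Adj x y) → C e ≠ C f

/-- The strong chromatic index: the least number of colors in a strong edge-coloring. -/
noncomputable def SimpleGraph.strongChromaticIndex {V : Type*} (G : SimpleGraph V) : ℕ :=
  sInf {n : ℕ | ∃ C : G.edgeSet → Fin n, G.IsStrongEdgeColoring C}

/-- A graph is `k`-degenerate if every (induced) subgraph has minimum degree at most `k`. -/
def SimpleGraph.IsKDegenerate {V : Type*} [Fintype V] [DecidableEq V]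
    (G : SimpleGraph V) [DecidableRel G.Adj] (k : ℕ) : Prop :=
  ∀ S : Finset V, S.Nonempty → ∃ v ∈ S, (S.filter (G.Adj v)).card ≤ k


namespace SCI

lemma hallF {V C : Type*} [DecidableEq V] [DecidableEq C] [Nonempty C] (X : Finset V)
    (L : V → Finset C) (h : ∀ I ⊆ X, I.card ≤ (I.biUnion L).card) :
    ∃ ψ : V → C, (∀ y ∈ X, ψ y ∈ L y) ∧ Set.InjOn ψ (X : Set V) := by
  have key := (Finset.all_card_le_biUnion_card_iff_exists_injective
    (fun y : {y // y ∈ X} => L y.1)).1 (by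
      intro s
      have := h (s.map (Function.Embedding.subtype _)) (by
        intro a ha
        simp only [Finset.mem_map, Function.Embedding.subtype_apply] at ha
        obtain ⟨b, _, rfl⟩ := ha
        exact b.2)
      rw [Finset.card_map] at this
      refine this.trans (Finset.card_le_card ?_)
      intro c hc
      simp only [Finset.mem_biUnion, Finset.mem_map, Function.Embedding.subtype_apply] at hc ⊢
      obtain ⟨a, ⟨b, hb, rfl⟩, hc⟩ := hc
      exact ⟨b, hb, hc⟩)
  obtain ⟨f, hf, hfL⟩ := key
  refine ⟨fun y => if hy : y ∈ X then f ⟨y, hy⟩ else Classical.arbitrary C, ?_, ?_⟩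
  · intro y hy
    simp only [hy, dif_pos]
    exact hfL ⟨y, hy⟩
  · intro y hy z hz hyz
    have hy' : y ∈ X := hy
    have hz' : z ∈ X := hz
    simp only [hy', hz', dif_pos] at hyz
    exact congrArg Subtype.val (hf hyz)

lemma greedyF {V C : Type*} [DecidableEq V] [DecidableEq C] [Nonempty C] (X : Finset V)
    (U : Finset C) (L : V → Finset C) (h : ∀ y ∈ X, X.card + U.card ≤ (L y).card) :
    ∃ ψ : V → C, (∀ y ∈ X, ψ y ∈ L y ∧ ψ y ∉ U) ∧ Set.InjOn ψ (X : Set V) := by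
  obtain ⟨ψ, h1, h2⟩ := hallF X (fun y => L y \ U) (by
    intro I hI
    rcases I.eq_empty_or_nonempty with rfl | ⟨y, hy⟩
    · simp
    have h1 : (L y \ U).card ≤ (I.biUnion (fun y => L y \ U)).card :=
      Finset.card_le_card (Finset.subset_biUnion_of_mem (fun y => L y \ U) hy)
    have h2 := Finset.le_card_sdiff U (L y)
    have h3 := h y (hI hy)
    have h4 := Finset.card_le_card hI
    omega)
  exact ⟨ψ, fun y hy => by simpa using h1 y hy, h2⟩

lemma firstEdges {V C : Type*} [DecidableEq V] [DecidableEq C] [Fintype C] [Nonempty C]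
    (X : Finset V) (Φ O : Finset C) (A E : V → Finset C) (g Δ o K : ℕ)
    (hO : O.card ≤ o) (hE : ∀ y ∈ X, (E y).card ≤ g) (hK : K + 3 * g + o = Δ + 2)
    (hN : Φ.card + (g + 1) * (X.card - K) + X.card ≤ Fintype.card C)
    (hD : 2 * g + o ≤ Δ + 1) :
    ∃ (ψ : V → C) (D : Finset C), D.card ≤ (g + 1) * (X.card - K) ∧
      Set.InjOn ψ (X : Set V) ∧ ∀ y ∈ X, ψ y ∉ Φ ∧ ψ y ∉ D ∧
        ((A y).card + g ≤ Δ + 1 ∨ g + 1 ≤ (A y ∩ ((Φ ∪ D) \ O)).card ∨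
          (ψ y ∈ A y ∧ ψ y ∉ E y)) := by
  obtain ⟨X0, hX0, hc0⟩ := Finset.exists_subset_card_eq (s := X) (n := min K X.card)
    (min_le_right _ _)
  have hYc : (X \ X0).card = X.card - K := by
    rw [Finset.card_sdiff_of_subset hX0, hc0]; omega
  have hDy : ∀ y, ∃ D : Finset C, D.card ≤ g + 1 ∧ ((A y).card + g ≤ Δ + 1 ∨
      (D ⊆ A y \ O ∧ g + 1 ≤ D.card)) := by
    intro y
    by_cases hA : (A y).card + g ≤ Δ + 1
    · exact ⟨∅, by simp, Or.inl hA⟩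
    · have h1 := Finset.le_card_sdiff O (A y)
      obtain ⟨D, hD1, hD2⟩ := Finset.exists_subset_card_eq (s := A y \ O) (n := g + 1) (by omega)
      exact ⟨D, by omega, Or.inr ⟨hD1, by omega⟩⟩
  choose D hDc hDA using hDy
  set DD := (X \ X0).biUnion D with hDD
  have hDDc : DD.card ≤ (g + 1) * (X.card - K) := by
    rw [← hYc, mul_comm]
    exact Finset.card_biUnion_le_card_mul _ _ _ (fun y _ => hDc y)
  have hcompl : X.card ≤ ((Φ ∪ DD)ᶜ).card := by
    rw [Finset.card_compl]
    have := Finset.card_union_le Φ DD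
    omega
  obtain ⟨ψ0, h01, h02⟩ := greedyF X0 ∅ (fun y =>
      if (A y).card + g ≤ Δ + 1 ∨ g + 1 ≤ (A y ∩ ((Φ ∪ DD) \ O)).card then (Φ ∪ DD)ᶜ
      else A y \ (Φ ∪ DD ∪ E y)) (by
    intro y hy
    have hle := Finset.card_le_card hX0
    simp only [Finset.card_empty, add_zero]
    split_ifs with hc
    · omega
    · push Not at hc
      have hsub : A y ⊆ (A y \ (Φ ∪ DD ∪ E y)) ∪ ((A y ∩ ((Φ ∪ DD) \ O)) ∪ (O ∪ E y)) := by
        intro c hcA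
        simp only [Finset.mem_union, Finset.mem_sdiff, Finset.mem_inter]
        tauto
      have h1 := Finset.card_le_card hsub
      have h2 := Finset.card_union_le (A y \ (Φ ∪ DD ∪ E y)) ((A y ∩ ((Φ ∪ DD) \ O)) ∪ (O ∪ E y))
      have h3 := Finset.card_union_le (A y ∩ ((Φ ∪ DD) \ O)) (O ∪ E y)
      have h4 := Finset.card_union_le O (E y)
      have h5 := hE y (hX0 hy)
      omega)
  obtain ⟨ψ1, h11, h12⟩ := greedyF (X \ X0) (X0.image ψ0) (fun _ => (Φ ∪ DD)ᶜ) (by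
    intro y hy
    have h1 : (X0.image ψ0).card ≤ X0.card := Finset.card_image_le
    have h2 := Finset.card_sdiff_of_subset hX0
    have h3 := Finset.card_le_card hX0
    omega)
  refine ⟨fun y => if y ∈ X0 then ψ0 y else ψ1 y, DD, hDDc, ?_, ?_⟩
  · intro y hy z hz hyz
    have hy' : y ∈ X := hy
    have hz' : z ∈ X := hz
    by_cases hy0 : y ∈ X0 <;> by_cases hz0 : z ∈ X0 <;> simp only [hy0, hz0, if_true, if_false] at hyz
    · exact h02 hy0 hz0 hyz
    · exact absurd (Finset.mem_image_of_mem ψ0 hy0)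
        (hyz ▸ (h11 z (Finset.mem_sdiff.2 ⟨hz', hz0⟩)).2)
    · exact absurd (Finset.mem_image_of_mem ψ0 hz0)
        (hyz ▸ (h11 y (Finset.mem_sdiff.2 ⟨hy', hy0⟩)).2)
    · exact h12 (by simp [hy', hy0]) (by simp [hz', hz0]) hyz
  · intro y hy
    by_cases hy0 : y ∈ X0
    · simp only [hy0, if_true]
      have := (h01 y hy0).1
      split_ifs at this with hc
      · simp only [Finset.mem_compl, Finset.mem_union, not_or] at this
        exact ⟨this.1, this.2, by tauto⟩
      · simp only [Finset.mem_sdiff, Finset.mem_union, not_or] at this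
        exact ⟨this.2.1.1, this.2.1.2, Or.inr (Or.inr ⟨this.1, this.2.2⟩)⟩
    · simp only [hy0, if_false]
      have hyY : y ∈ X \ X0 := Finset.mem_sdiff.2 ⟨hy, hy0⟩
      have := (h11 y hyY).1
      simp only [Finset.mem_compl, Finset.mem_union, not_or] at this
      refine ⟨this.1, this.2, ?_⟩
      rcases hDA y with h | ⟨h, h'⟩
      · exact Or.inl h
      · refine Or.inr (Or.inl (h'.trans (Finset.card_le_card ?_)))
        intro c hc
        have hcA := Finset.mem_sdiff.1 (h hc)
        simp only [Finset.mem_inter, Finset.mem_sdiff, Finset.mem_union]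
        exact ⟨hcA.1, Or.inr (Finset.mem_biUnion.2 ⟨y, hyY, hc⟩), hcA.2⟩

lemma secondEdges {V C : Type*} [DecidableEq V] [DecidableEq C] [Fintype C] [Nonempty C]
    (X : Finset V) (F : Finset C) (T : V → Finset C) (σ : V → C) (κ : V → ℕ)
    (g Δ o k1 : ℕ) (ho : o ≤ 2) (hdeg : X.card + k1 + o ≤ Δ)
    (hF : F.card ≤ o * (Δ + 2) + X.card + k1) (hN : Fintype.card C + g = 5 * Δ + 1)
    (hg : g ≤ Δ)
    (hT : ∀ y ∈ X, (T y).card ≤ Δ + 2) (hs : ∀ y ∈ X, ∃ c ∈ F, c ∈ T y)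
    (hσF : ∀ y ∈ X, σ y ∈ F)
    (hκ : ∀ y ∈ X, ∀ z ∈ X, κ y = κ z → σ y = σ z → y = z)
    (hfull : ∀ I ⊆ X, X.card + 1 ≤ I.card + g → Δ ≤ I.card + g + 1 →
      ∃ B ⊆ I, ∃ r ∈ B, B.card = g + 1 ∧ ∀ y ∈ B, ((T r).card + g ≤ Δ + 1 ∨
        g + 1 ≤ (T r \ T y).card ∨ (σ y ∈ T r ∧ ∀ z ∈ B, κ y < κ z → σ z ≠ σ y))) :
    ∃ ψ : V → C, (∀ y ∈ X, ψ y ∉ F ∧ ψ y ∉ T y) ∧ Set.InjOn ψ (X : Set V) := by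
  obtain ⟨ψ, h1, h2⟩ := hallF X (fun y => (F ∪ T y)ᶜ) (by
    by_contra hcon
    push Not at hcon
    obtain ⟨I, hI, hlt⟩ := hcon
    set W := I.biUnion (fun y => (F ∪ T y)ᶜ) with hW
    have hIX := Finset.card_le_card hI
    obtain ⟨y0, hy0⟩ : I.Nonempty := by
      rw [Finset.nonempty_iff_ne_empty]; rintro rfl; simp at hlt
    have ho' : o * (Δ + 2) ≤ 2 * Δ + 2 * o := by nlinarith
    have hL : ((F ∪ T y0)ᶜ).card ≤ W.card :=
      Finset.card_le_card (Finset.subset_biUnion_of_mem (fun y => (F ∪ T y)ᶜ) hy0)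
    have hFT : (F ∪ T y0).card + 1 ≤ F.card + (T y0).card := by
      have := Finset.card_union_add_card_inter F (T y0)
      obtain ⟨c, hc1, hc2⟩ := hs y0 (hI hy0)
      have : 0 < (F ∩ T y0).card := Finset.card_pos.2 ⟨c, Finset.mem_inter.2 ⟨hc1, hc2⟩⟩
      omega
    rw [Finset.card_compl] at hL
    have hT0 := hT y0 (hI hy0)
    obtain ⟨B, hB, r, hr, hBc, hBy⟩ := hfull I hI (by omega) (by omega)
    set Q := (F ∪ W)ᶜ with hQ
    have hQc : Δ + 2 ≤ Q.card + g := by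
      rw [hQ, Finset.card_compl]
      have := Finset.card_union_le F W
      omega
    have hQT : ∀ y ∈ I, Q ⊆ T y := by
      intro y hy c hc
      by_contra hcT
      simp only [hQ, Finset.mem_compl, Finset.mem_union, not_or] at hc
      exact hc.2 (Finset.mem_biUnion.2 ⟨y, hy, by simp [hc.1, hcT]⟩)
    have hrQ : (T r \ Q).card ≤ g := by
      rw [Finset.card_sdiff_of_subset (hQT r (hB hr))]
      have := hT r (hI (hB hr))
      omega
    have hα : ∀ y ∈ B, (σ y ∈ T r ∧ ∀ z ∈ B, κ y < κ z → σ z ≠ σ y) := by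
      intro y hy
      rcases hBy y hy with h | h | h
      · have := Finset.card_le_card (hQT r (hB hr))
        omega
      · have : T r \ T y ⊆ T r \ Q := Finset.sdiff_subset_sdiff (le_refl _) (hQT y (hB hy))
        have := Finset.card_le_card this
        omega
      · exact h
    have hinj : Set.InjOn σ (B : Set V) := by
      intro y hy z hz hyz
      rcases lt_trichotomy (κ y) (κ z) with h | h | h
      · exact absurd hyz.symm ((hα y hy).2 z hz h)
      · exact hκ y (hI (hB hy)) z (hI (hB hz)) h hyz
      · exact absurd hyz ((hα z hz).2 y hy h)
    have hle : B.card ≤ (T r \ Q).card := by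
      refine Finset.card_le_card_of_injOn σ ?_ hinj
      intro y hy
      have := hσF y (hI (hB hy))
      simp only [Finset.coe_sdiff, Set.mem_diff, Finset.mem_coe]
      refine ⟨(hα y hy).1, ?_⟩
      simp [hQ, this]
    omega)
  refine ⟨ψ, fun y hy => ?_, h2⟩
  have := h1 y hy
  simpa [not_or] using this

end SCI

namespace SCI

structure DG (V : Type*) [DecidableEq V] (Δ g : ℕ) where
  inn : V → Finset V
  out : V → Finset V
  rk : V → ℕ
  rk_inj : ∀ u v, rk u = rk v → u = v
  hio : ∀ y v, y ∈ inn v ↔ v ∈ out y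
  rk_lt : ∀ y v, v ∈ out y → rk y < rk v
  out2 : ∀ v, (out v).card ≤ 2
  deg : ∀ v, (inn v).card + (out v).card ≤ Δ
  h1 : V → V
  h1_mem : ∀ y v, v ∈ out y → h1 y ∈ out y
  h1_max : ∀ y v, v ∈ out y → rk v ≤ rk (h1 y)
  B : V → ℕ → Finset V
  B_out : ∀ v j y, y ∈ B v j → v ∈ out y
  B_ne : ∀ v j y, y ∈ B v j → h1 y ≠ v
  B_card : ∀ v j, (B v j).card ≤ g + 1
  B_disj : ∀ v i j y, y ∈ B v i → y ∈ B v j → i = j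
  ref : V → ℕ → V
  ref_mem : ∀ v j y, y ∈ B v j → ref v j ∈ B v j
  ref_max : ∀ v j y, y ∈ B v j → rk (h1 y) ≤ rk (h1 (ref v j))
  B_full : ∀ v I, I ⊆ (inn v).filter (fun y => h1 y ≠ v) →
    ((inn v).filter (fun y => h1 y ≠ v)).card + 1 ≤ I.card + g → Δ ≤ I.card + g + 1 →
    ∃ j, B v j ⊆ I ∧ (B v j).card = g + 1

namespace DG

variable {V C : Type*} [DecidableEq V] [DecidableEq C] {Δ g : ℕ} (D : DG V Δ g)

def in1 (v : V) : Finset V := (D.inn v).filter (fun y => D.h1 y = v)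
def in2 (v : V) : Finset V := (D.inn v).filter (fun y => D.h1 y ≠ v)

lemma mem_in1 {v y : V} : y ∈ D.in1 v ↔ v ∈ D.out y ∧ D.h1 y = v := by
  simp [in1, D.hio]
lemma mem_in2 {v y : V} : y ∈ D.in2 v ↔ v ∈ D.out y ∧ D.h1 y ≠ v := by
  simp [in2, D.hio]

lemma card_in (v : V) : (D.in1 v).card + (D.in2 v).card = (D.inn v).card := by
  unfold in1 in2
  exact Finset.card_filter_add_card_filter_not _

lemma second_unique {y v w : V} (hv : y ∈ D.in2 v) (hw : y ∈ D.in2 w) : v = w := by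
  rw [mem_in2] at hv hw
  by_contra hne
  have h3 : ({v, w, D.h1 y} : Finset V).card = 3 := by
    rw [Finset.card_eq_three]
    exact ⟨v, w, D.h1 y, hne, fun h => hv.2 h.symm, fun h => hw.2 h.symm, rfl⟩
  have : ({v, w, D.h1 y} : Finset V) ⊆ D.out y := by
    intro x hx
    simp only [Finset.mem_insert, Finset.mem_singleton] at hx
    rcases hx with rfl | rfl | rfl
    · exact hv.1
    · exact hw.1
    · exact D.h1_mem _ _ hv.1
  have := Finset.card_le_card this
  have := D.out2 y
  omega

lemma rk_h1 {y v : V} (hv : y ∈ D.in2 v) : D.rk v < D.rk (D.h1 y) := by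
  rw [mem_in2] at hv
  have h := D.h1_max _ _ hv.1
  rcases h.lt_or_eq with h | h
  · exact h
  · exact absurd (D.rk_inj _ _ h).symm hv.2

lemma B_in2 {v y : V} {j : ℕ} (h : y ∈ D.B v j) : y ∈ D.in2 v :=
  D.mem_in2.2 ⟨D.B_out _ _ _ h, D.B_ne _ _ _ h⟩

def T (φ : V → V → C) (R : V → Finset C) (w : V) : Finset C := R w ∪ (D.out w).image (φ w)

lemma T_congr {φ φ' : V → V → C} {R R' : V → Finset C} {w : V} (hR : R' w = R w)
    (hφ : ∀ u ∈ D.out w, φ' w u = φ w u) : D.T φ' R' w = D.T φ R w := by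
  unfold T
  rw [hR]
  congr 1
  exact Finset.image_congr (fun u hu => hφ u hu)

structure Inv (m : ℕ) (φ : V → V → C) (R : V → Finset C) : Prop where
  a : ∀ v, m ≤ D.rk v → (R v).card = (D.inn v).card + 2
  b1 : ∀ v, m ≤ D.rk v → ∀ y, v ∈ D.out y → φ y v ∈ R v
  b2 : ∀ v, m ≤ D.rk v → ∀ y z, v ∈ D.out y → v ∈ D.out z → φ y v = φ z v → y = z
  c : ∀ v, m ≤ D.rk v → ∀ u ∈ D.out v, Disjoint (R v) (D.T φ R u)
  d : ∀ v, m ≤ D.rk v → ∀ y ∈ D.in2 v, φ y v ∉ D.T φ R (D.h1 y) ∧ φ y (D.h1 y) ∉ D.T φ R v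
  e : ∀ v, D.rk v < m → ∀ j, ∀ y ∈ D.B v j, m ≤ D.rk (D.h1 y) →
    ((D.T φ R (D.h1 (D.ref v j))).card + g ≤ Δ + 1 ∨
      g + 1 ≤ (D.T φ R (D.h1 (D.ref v j)) \ D.T φ R (D.h1 y)).card ∨
      (φ y (D.h1 y) ∈ D.T φ R (D.h1 (D.ref v j)) ∧
        ∀ z ∈ D.B v j, D.rk (D.h1 y) < D.rk (D.h1 z) → φ z (D.h1 z) ≠ φ y (D.h1 y)))

lemma T_card {m : ℕ} {φ : V → V → C} {R : V → Finset C} (h : D.Inv m φ R) {w : V}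
    (hw : m ≤ D.rk w) : (D.T φ R w).card ≤ Δ + 2 := by
  have h1 := Finset.card_union_le (R w) ((D.out w).image (φ w))
  have h2 : ((D.out w).image (φ w)).card ≤ (D.out w).card := Finset.card_image_le
  have h3 := h.a w hw
  have h4 := D.deg w
  unfold T
  omega

lemma recolor (v : V) (φ : V → V → C) (R : V → Finset C) (O : Finset C) (hO : O.card ≤ 2)
    (ha : ∀ w, D.rk v < D.rk w → (R w).card = (D.inn w).card + 2)
    (hb1 : ∀ w, D.rk v < D.rk w → ∀ y, w ∈ D.out y → φ y w ∈ R w)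
    (hb2 : ∀ w, D.rk v < D.rk w → ∀ y z, w ∈ D.out y → w ∈ D.out z → φ y w = φ z w → y = z)
    (X : Finset V) (hX : X ⊆ D.in2 v) :
    ∃ φ1 : V → V → C, (∀ y u, ¬ (y ∈ X ∧ u = D.h1 y) → φ1 y u = φ y u) ∧
      (∀ w, D.rk v < D.rk w → ∀ y, w ∈ D.out y → φ1 y w ∈ R w) ∧
      (∀ w, D.rk v < D.rk w → ∀ y z, w ∈ D.out y → w ∈ D.out z → φ1 y w = φ1 z w → y = z) ∧
      (∀ y ∈ X, φ1 y (D.h1 y) ∉ O ∧ (φ1 y (D.h1 y) = φ y (D.h1 y) ∨ φ y (D.h1 y) ∈ O)) := by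
  induction X using Finset.induction_on with
  | empty => exact ⟨φ, by simp, hb1, hb2, by simp⟩
  | insert y0 X hy0 ih =>
    obtain ⟨φ1, e1, e2, e3, e4⟩ := ih (fun x hx => hX (Finset.mem_insert_of_mem hx))
    have hy2 : y0 ∈ D.in2 v := hX (Finset.mem_insert_self _ _)
    have heq : φ1 y0 (D.h1 y0) = φ y0 (D.h1 y0) := e1 _ _ (fun h => hy0 h.1)
    by_cases hin : φ1 y0 (D.h1 y0) ∈ O
    · have hrk := D.rk_h1 hy2
      have hm : D.h1 y0 ∈ D.out y0 := D.h1_mem _ _ (D.mem_in2.1 hy2).1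
      have hmi : y0 ∈ D.inn (D.h1 y0) := (D.hio _ _).2 hm
      obtain ⟨c, hc⟩ : (R (D.h1 y0) \ (((D.inn (D.h1 y0)).erase y0).image
          (fun z => φ1 z (D.h1 y0)) ∪ O)).Nonempty := by
        rw [← Finset.card_pos]
        have k1 := Finset.le_card_sdiff (((D.inn (D.h1 y0)).erase y0).image
          (fun z => φ1 z (D.h1 y0)) ∪ O) (R (D.h1 y0))
        have k2 := Finset.card_union_le (((D.inn (D.h1 y0)).erase y0).image
          (fun z => φ1 z (D.h1 y0))) O
        have k3 : (((D.inn (D.h1 y0)).erase y0).image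
          (fun z => φ1 z (D.h1 y0))).card ≤ ((D.inn (D.h1 y0)).erase y0).card :=
          Finset.card_image_le
        have k4 := Finset.card_erase_of_mem hmi
        have k5 := Finset.card_pos.2 ⟨_, hmi⟩
        have k6 := ha _ hrk
        omega
      simp only [Finset.mem_sdiff, Finset.mem_union, not_or, Finset.mem_image, Finset.mem_erase,
        not_exists, not_and] at hc
      obtain ⟨hcR, hcN, hcO⟩ := hc
      refine ⟨fun y u => if y = y0 ∧ u = D.h1 y0 then c else φ1 y u, ?_, ?_, ?_, ?_⟩
      · intro y u h
        have h' : ¬ (y = y0 ∧ u = D.h1 y0) := by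
          rintro ⟨rfl, rfl⟩; exact h ⟨Finset.mem_insert_self _ _, rfl⟩
        simp only [h', if_false]
        exact e1 _ _ (fun h2 => h ⟨Finset.mem_insert_of_mem h2.1, h2.2⟩)
      · intro w hw y hy
        by_cases h' : y = y0 ∧ w = D.h1 y0
        · simp only [h', and_self, if_true]; exact hcR
        · simp only [h', if_false]; exact e2 w hw y hy
      · intro w hw y z hy hz h
        by_cases h1 : y = y0 ∧ w = D.h1 y0
        · by_cases h2 : z = y0 ∧ w = D.h1 y0
          · rw [h1.1, h2.1]
          · simp only [h1, h2, and_self, if_true, if_false] at h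
            exfalso
            obtain ⟨rfl, rfl⟩ := h1
            have hzy : z ≠ y := fun hh => h2 ⟨hh, rfl⟩
            refine hcN z ⟨hzy, (D.hio _ _).2 hz⟩ ?_
            simpa [hzy] using h.symm
        · by_cases h2 : z = y0 ∧ w = D.h1 y0
          · exfalso
            obtain ⟨rfl, rfl⟩ := h2
            have hzy : y ≠ z := fun hh => h1 ⟨hh, rfl⟩
            refine hcN y ⟨hzy, (D.hio _ _).2 hy⟩ ?_
            simpa [hzy] using h
          · simp only [h1, h2, if_false] at h
            exact e3 w hw y z hy hz h
      · intro y hy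
        rw [Finset.mem_insert] at hy
        by_cases h' : y = y0
        · subst h'
          simp only [and_self, if_true]
          exact ⟨hcO, Or.inr (heq ▸ hin)⟩
        · simp only [h', false_and, if_false]
          exact e4 y (hy.resolve_left h')
    · refine ⟨φ1, fun y u h => e1 _ _ (fun h2 => h ⟨Finset.mem_insert_of_mem h2.1, h2.2⟩),
        e2, e3, ?_⟩
      intro y hy
      rw [Finset.mem_insert] at hy
      rcases hy with rfl | hy
      · exact ⟨hin, Or.inl heq⟩
      · exact e4 y hy

end DG
end SCI

namespace SCI


lemma num1' (o Δ g k k1 K N : ℕ) (ho : o ≤ 2) (hdeg : k1 + k + o ≤ Δ) (hN : N + g = 5 * Δ + 1)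
    (hg : 4 * g ^ 2 + 1 ≤ Δ) (hK : K + 3 * g + o = Δ + 2) :
    o * (Δ + 2) + k + (g + 1) * (k1 - K) + k1 + k + 2 ≤ N := by
  obtain ⟨x, hx⟩ : ∃ x, x = k1 - K := ⟨_, rfl⟩
  rw [← hx]
  have h3 : g ≤ g ^ 2 := Nat.le_self_pow (by norm_num) g
  have h1 : o * (Δ + 2) + k + k1 ≤ 3 * Δ + 2 := by
    interval_cases o <;> omega
  have h5 : o * (Δ + 2) + k + k1 + k ≤ 4 * Δ := by
    interval_cases o <;> omega
  rcases Nat.eq_zero_or_pos x with h | h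
  · subst h
    simp only [mul_zero]
    omega
  · have h4 : x + k + 2 ≤ 3 * g := by omega
    have h2 : (g + 1) * x ≤ 3 * g ^ 2 + g := by nlinarith
    omega

lemma num2 (o Δ g k k1 K N : ℕ) (ho : o ≤ 2) (hdeg : k1 + k + o ≤ Δ) (hN : N + g = 5 * Δ + 1)
    (hg : 4 * g ^ 2 + 1 ≤ Δ) (hK : K + 3 * g + o = Δ + 2) (hk : 1 ≤ k) (hkK : K < k1) :
    k + (o * (Δ + 2) + k + (g + 1) * (k1 - K) + k1) + (Δ + 1) ≤ N := by
  obtain ⟨x, hx⟩ : ∃ x, x = k1 - K := ⟨_, rfl⟩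
  rw [← hx]
  have h3 : g ≤ g ^ 2 := Nat.le_self_pow (by norm_num) g
  have h1 : o * (Δ + 2) + k + k1 ≤ 3 * Δ + 2 := by
    interval_cases o <;> omega
  have h4 : x + k + 2 ≤ 3 * g := by omega
  have h2 : (g + 1) * x + k + 2 ≤ 3 * g ^ 2 := by nlinarith
  omega

lemma combine {V C : Type*} [DecidableEq V] [DecidableEq C] [Fintype C] [Nonempty C]
    (X1 X2 : Finset V) (hdisj : Disjoint X1 X2) (Φ O : Finset C) (A E T : V → Finset C)
    (σ : V → C) (κ : V → ℕ) (g Δ o : ℕ) (ho : o ≤ 2) (hdeg : X1.card + X2.card + o ≤ Δ)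
    (hO : O.card ≤ o) (hΦ : Φ.card ≤ o * (Δ + 2) + X2.card)
    (hN : Fintype.card C + g = 5 * Δ + 1) (hg : 4 * g ^ 2 + 1 ≤ Δ)
    (hE : ∀ y ∈ X1, (E y).card ≤ g)
    (hT : ∀ y ∈ X2, (T y).card ≤ Δ + 2) (hs : ∀ y ∈ X2, ∃ c ∈ Φ, c ∈ T y)
    (hσF : ∀ y ∈ X2, σ y ∈ Φ)
    (hκ : ∀ y ∈ X2, ∀ z ∈ X2, κ y = κ z → σ y = σ z → y = z)
    (hfull : ∀ I ⊆ X2, X2.card + 1 ≤ I.card + g → Δ ≤ I.card + g + 1 →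
      ∃ B ⊆ I, ∃ r ∈ B, B.card = g + 1 ∧ ∀ y ∈ B, ((T r).card + g ≤ Δ + 1 ∨
        g + 1 ≤ (T r \ T y).card ∨ (σ y ∈ T r ∧ ∀ z ∈ B, κ y < κ z → σ z ≠ σ y))) :
    ∃ (ψ : V → C) (D : Finset C),
      Φ.card + D.card + X1.card + X2.card + 2 ≤ Fintype.card C ∧
      Set.InjOn ψ ((X1 ∪ X2 : Finset V) : Set V) ∧
      (∀ y ∈ X1 ∪ X2, ψ y ∉ Φ ∧ ψ y ∉ D) ∧ (∀ y ∈ X2, ψ y ∉ T y) ∧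
      (∀ y ∈ X1, ((A y).card + g ≤ Δ + 1 ∨ g + 1 ≤ (A y ∩ ((Φ ∪ D) \ O)).card ∨
          (ψ y ∈ A y ∧ ψ y ∉ E y))) := by
  have h3 : g ≤ g ^ 2 := Nat.le_self_pow (by norm_num) g
  obtain ⟨K, hK⟩ : ∃ K, K + 3 * g + o = Δ + 2 := ⟨Δ + 2 - 3 * g - o, by omega⟩
  have n1 := num1' o Δ g X2.card X1.card K _ ho hdeg hN hg hK
  obtain ⟨ψ1, D, hD, hinj1, hψ1⟩ := firstEdges X1 Φ O A E g Δ o K hO hE hK (by omega) (by omega)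
  have key : ∃ ψ2 : V → C, (∀ y ∈ X2, ψ2 y ∉ (Φ ∪ D ∪ X1.image ψ1) ∧ ψ2 y ∉ T y) ∧
      Set.InjOn ψ2 (X2 : Set V) := by
    have hi : (X1.image ψ1).card ≤ X1.card := Finset.card_image_le
    have hu1 := Finset.card_union_le (Φ ∪ D) (X1.image ψ1)
    have hu2 := Finset.card_union_le Φ D
    rcases Nat.lt_or_ge K X1.card with hlt | hle
    · rcases X2.eq_empty_or_nonempty with rfl | hne
      · exact ⟨ψ1, by simp, by simp⟩
      have n2 := num2 o Δ g X2.card X1.card K _ ho hdeg hN hg hK (Finset.card_pos.2 hne) hlt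
      obtain ⟨ψ2, g1, g2⟩ := greedyF X2 (Φ ∪ D ∪ X1.image ψ1) (fun y => (T y \ Φ)ᶜ) (by
        intro y hy
        obtain ⟨c, hcΦ, hcT⟩ := hs y hy
        have : (T y \ Φ).card < (T y).card := by
          apply Finset.card_lt_card
          refine ⟨Finset.sdiff_subset, fun h => ?_⟩
          exact (Finset.mem_sdiff.1 (h hcT)).2 hcΦ
        have := hT y hy
        rw [Finset.card_compl]
        omega)
      refine ⟨ψ2, fun y hy => ⟨(g1 y hy).2, fun hT => ?_⟩, g2⟩
      have e1 := (g1 y hy).1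
      have e2 := (g1 y hy).2
      simp only [Finset.mem_compl, Finset.mem_sdiff, Finset.mem_union, not_or, not_and,
        not_not] at e1 e2
      exact e2.1.1 (e1 hT)
    · have hx : X1.card - K = 0 := by omega
      rw [hx] at hD
      refine secondEdges X2 (Φ ∪ D ∪ X1.image ψ1) T σ κ g Δ o X1.card ho (by omega) (by omega) hN
        (by omega) hT ?_ ?_ hκ hfull
      · intro y hy
        obtain ⟨c, h, h'⟩ := hs y hy
        exact ⟨c, by simp [h], h'⟩
      · intro y hy
        simp [hσF y hy]
  obtain ⟨ψ2, hψ2, hinj2⟩ := key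
  have hd : ∀ y ∈ X2, y ∉ X1 := fun y h2 h1 => Finset.disjoint_left.1 hdisj h1 h2
  refine ⟨fun y => if y ∈ X1 then ψ1 y else ψ2 y, D, by omega, ?_, ?_, ?_, ?_⟩
  · intro y hy z hz h
    simp only [Finset.coe_union, Set.mem_union, Finset.mem_coe] at hy hz
    by_cases hy1 : y ∈ X1
    · by_cases hz1 : z ∈ X1
      · simp only [hy1, hz1, if_true] at h
        exact hinj1 hy1 hz1 h
      · simp only [hy1, hz1, if_true, if_false] at h
        have := (hψ2 z (hz.resolve_left hz1)).1
        exact absurd (by rw [← h]; simp only [Finset.mem_union]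
                         exact Or.inr (Finset.mem_image_of_mem _ hy1)) this
    · by_cases hz1 : z ∈ X1
      · simp only [hy1, hz1, if_true, if_false] at h
        have := (hψ2 y (hy.resolve_left hy1)).1
        exact absurd (by rw [h]; simp only [Finset.mem_union]
                         exact Or.inr (Finset.mem_image_of_mem _ hz1)) this
      · simp only [hy1, hz1, if_false] at h
        exact hinj2 (hy.resolve_left hy1) (hz.resolve_left hz1) h
  · intro y hy
    rw [Finset.mem_union] at hy
    by_cases hy1 : y ∈ X1
    · simp only [hy1, if_true]
      exact ⟨(hψ1 y hy1).1, (hψ1 y hy1).2.1⟩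
    · simp only [hy1, if_false]
      have := (hψ2 y (hy.resolve_left hy1)).1
      simp only [Finset.mem_union, not_or] at this
      exact this.1
  · intro y hy
    simp only [hd y hy, if_false]
    exact (hψ2 y hy).2
  · intro y hy
    simp only [hy, if_true]
    exact (hψ1 y hy).2.2

end SCI

namespace SCI
namespace DG

variable {V C : Type*} [DecidableEq V] [DecidableEq C] {Δ g : ℕ} (D : DG V Δ g)

lemma exists_p : ∃ p : V → V × ℕ, ∀ y v j, y ∈ D.B v j → p y = (v, j) := by
  have : ∀ y, ∃ q : V × ℕ, ∀ v j, y ∈ D.B v j → q = (v, j) := by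
    intro y
    by_cases h : ∃ v j, y ∈ D.B v j
    · obtain ⟨v, j, hy⟩ := h
      refine ⟨(v, j), fun v' j' hy' => ?_⟩
      have e := D.second_unique (D.B_in2 hy) (D.B_in2 hy')
      subst e
      rw [D.B_disj _ _ _ _ hy hy']
    · exact ⟨(y, 0), fun v j hy => absurd ⟨v, j, hy⟩ h⟩
  choose p hp using this
  exact ⟨p, hp⟩

theorem step [Fintype C] [Nonempty C] (hN : Fintype.card C + g = 5 * Δ + 1)
    (hg : 4 * g ^ 2 + 1 ≤ Δ) (m : ℕ) (φ : V → V → C) (R : V → Finset C)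
    (h : D.Inv (m + 1) φ R) : ∃ (φ' : V → V → C) (R' : V → Finset C), D.Inv m φ' R' := by
  by_cases hv : ∃ v, D.rk v = m
  swap
  · have hv' : ∀ v, m ≤ D.rk v → m + 1 ≤ D.rk v := fun v hm => by
      have : D.rk v ≠ m := fun e => hv ⟨v, e⟩
      omega
    exact ⟨φ, R, fun v hm => h.a v (hv' v hm), fun v hm => h.b1 v (hv' v hm),
      fun v hm => h.b2 v (hv' v hm), fun v hm => h.c v (hv' v hm), fun v hm => h.d v (hv' v hm),
      fun v hm j y hy hm' => h.e v (by omega) j y hy (hv' _ hm')⟩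
  obtain ⟨v, rfl⟩ := hv
  set O := (D.out v).image (φ v) with hOdef
  have hOc : O.card ≤ (D.out v).card := Finset.card_image_le
  obtain ⟨φ1, e1, e2, e3, e4⟩ := D.recolor v φ R O (hOc.trans (D.out2 v))
    (fun w hw => h.a w hw) (fun w hw => h.b1 w hw) (fun w hw => h.b2 w hw) (D.in2 v) subset_rfl
  have e1' : ∀ y u, y ∉ D.in2 v → φ1 y u = φ y u := fun y u hy => e1 y u (fun h => hy h.1)
  set S := (D.in2 v).image (fun y => φ1 y (D.h1 y)) with hSdef
  have hSc : S.card ≤ (D.in2 v).card := Finset.card_image_le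
  set Φ := (D.out v).biUnion (D.T φ R) ∪ S with hΦdef
  have hΦc : Φ.card ≤ (D.out v).card * (Δ + 2) + (D.in2 v).card := by
    have k1 := Finset.card_union_le ((D.out v).biUnion (D.T φ R)) S
    have k2 := Finset.card_biUnion_le_card_mul (D.out v) (D.T φ R) (Δ + 2)
      (fun u hu => D.T_card h (D.rk_lt _ _ hu))
    exact k1.trans (Nat.add_le_add k2 hSc)
  have hTΦ : ∀ u ∈ D.out v, D.T φ R u ⊆ Φ := fun u hu =>
    (Finset.subset_biUnion_of_mem (D.T φ R) hu).trans Finset.subset_union_left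
  have hOΦ : O ⊆ Φ := by
    intro c hc
    obtain ⟨u, hu, rfl⟩ := Finset.mem_image.1 hc
    refine hTΦ u hu ?_
    unfold T
    exact Finset.mem_union_left _ (h.b1 u (D.rk_lt _ _ hu) v hu)
  obtain ⟨p, hp⟩ := D.exists_p
  have hdisj : Disjoint (D.in1 v) (D.in2 v) := by
    rw [Finset.disjoint_left]
    intro y hy hy'
    exact (D.mem_in2.1 hy').2 (D.mem_in1.1 hy).2
  have hunion : D.in1 v ∪ D.in2 v = D.inn v := by
    unfold in1 in2
    exact Finset.filter_union_filter_not_eq _ _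
  have hm2 : ∀ y ∈ D.in2 v, D.h1 y ∈ D.out y := fun y hy => D.h1_mem _ _ (D.mem_in2.1 hy).1
  have hcard := D.card_in v
  obtain ⟨ψ, Dd, q1, q2, q3, q4, q5⟩ := combine (D.in1 v) (D.in2 v) hdisj Φ O
    (fun y => D.T φ R (D.h1 (D.ref (p y).1 (p y).2)))
    (fun y => if y ∈ D.B (p y).1 (p y).2 then
      ((D.B (p y).1 (p y).2).filter (fun z => D.rk v < D.rk (D.h1 z))).image
        (fun z => φ z (D.h1 z)) else ∅)
    (fun y => D.T φ R (D.h1 y)) (fun y => φ y (D.h1 y)) (fun y => D.rk (D.h1 y)) g Δ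
    (D.out v).card (D.out2 v) (by have := D.deg v; omega) hOc hΦc hN hg
    (by
      intro y hy
      split_ifs with hB
      · refine Finset.card_image_le.trans ?_
        have hlt : ((D.B (p y).1 (p y).2).filter (fun z => D.rk v < D.rk (D.h1 z))).card <
            (D.B (p y).1 (p y).2).card := by
          apply Finset.card_lt_card
          refine ⟨Finset.filter_subset _ _, fun hh => ?_⟩
          have := (Finset.mem_filter.1 (hh hB)).2
          rw [(D.mem_in1.1 hy).2] at this
          exact lt_irrefl _ this
        have := D.B_card (p y).1 (p y).2
        omega
      · simp)
    (fun y hy => D.T_card h (D.rk_h1 hy))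
    (fun y hy => ⟨φ1 y (D.h1 y), Finset.mem_union_right _ (Finset.mem_image_of_mem _ hy),
      Finset.mem_union_left _ (e2 _ (D.rk_h1 hy) y (hm2 y hy))⟩)
    (by
      intro y hy
      rcases (e4 y hy).2 with h' | h'
      · change φ y (D.h1 y) ∈ Φ
        rw [← h']
        exact Finset.mem_union_right _ (Finset.mem_image_of_mem _ hy)
      · exact hOΦ h')
    (by
      intro y hy z hz hk hs
      have hk' := D.rk_inj _ _ hk
      refine h.b2 (D.h1 y) (D.rk_h1 hy) y z (hm2 y hy) (hk' ▸ hm2 z hz) ?_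
      rw [hs, hk'])
    (by
      intro I hI h1 h2
      obtain ⟨j, hj, hjc⟩ := D.B_full v I hI h1 h2
      obtain ⟨y0, hy0⟩ : (D.B v j).Nonempty := by rw [← Finset.card_pos]; omega
      refine ⟨D.B v j, hj, D.ref v j, D.ref_mem _ _ _ hy0, hjc, fun y hy => ?_⟩
      exact h.e v (Nat.lt_succ_self _) j y hy (D.rk_h1 (D.B_in2 hy)))
  rw [hunion] at q2 q3
  set Q := (D.inn v).image ψ with hQ
  have hQc : Q.card = (D.inn v).card := Finset.card_image_of_injOn q2
  obtain ⟨X, hXs, hXc⟩ := Finset.exists_subset_card_eq (s := (Φ ∪ Dd ∪ Q)ᶜ) (n := 2) (by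
    have k1 := Finset.card_union_le (Φ ∪ Dd) Q
    have k2 := Finset.card_union_le Φ Dd
    rw [Finset.card_compl]
    omega)
  have hXn : ∀ c ∈ X, c ∉ Φ ∧ c ∉ Dd ∧ c ∉ Q := by
    intro c hc
    have := hXs hc
    simp only [Finset.mem_compl, Finset.mem_union, not_or] at this
    exact ⟨this.1.1, this.1.2, this.2⟩
  set φ' : V → V → C := fun y u => if u = v then ψ y else φ1 y u with hφ'
  set R' : V → Finset C := Function.update R v (Q ∪ X) with hR'
  have hR'v : R' v = Q ∪ X := by simp [hR']
  have hR'w : ∀ w, w ≠ v → R' w = R w := fun w hw => by simp [hR', hw]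
  have hφv : ∀ y, φ' y v = ψ y := fun y => by simp [hφ']
  have hφw : ∀ y u, u ≠ v → φ' y u = φ1 y u := fun y u hu => by simp [hφ', hu]
  have hne : ∀ w, D.rk v < D.rk w → w ≠ v := fun w hw e => by rw [e] at hw; exact lt_irrefl _ hw
  have hlt : ∀ w, D.rk v ≤ D.rk w → w ≠ v → D.rk v < D.rk w := fun w hw e => by
    rcases hw.lt_or_eq with h' | h'
    · exact h'
    · exact absurd (D.rk_inj _ _ h').symm e
  have hin2 : ∀ w, D.rk v ≤ D.rk w → w ∉ D.in2 v := fun w hw h' => by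
    have := D.rk_lt _ _ (D.mem_in2.1 h').1
    omega
  have hT' : ∀ w, D.rk v < D.rk w → D.T φ' R' w = D.T φ R w := by
    intro w hw
    refine D.T_congr (hR'w w (hne w hw)) (fun u hu => ?_)
    have : D.rk v < D.rk u := hw.trans (D.rk_lt _ _ hu)
    rw [hφw _ _ (hne u this), e1' _ _ (hin2 w hw.le)]
  have hTv : D.T φ' R' v = (Q ∪ X) ∪ O := by
    unfold T
    rw [hR'v, hOdef]
    congr 1
    refine Finset.image_congr (fun u hu => ?_)
    have : D.rk v < D.rk u := D.rk_lt _ _ hu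
    rw [hφw _ _ (hne u this), e1' _ _ (hin2 v le_rfl)]
  have hQX : ∀ c ∈ Q ∪ X, c ∉ Φ ∧ c ∉ Dd := by
    intro c hc
    rcases Finset.mem_union.1 hc with hc | hc
    · obtain ⟨y, hy, rfl⟩ := Finset.mem_image.1 hc
      exact q3 y hy
    · exact ⟨(hXn c hc).1, (hXn c hc).2.1⟩
  have hψQ : ∀ y, v ∈ D.out y → ψ y ∈ Q := fun y hy =>
    Finset.mem_image_of_mem _ ((D.hio _ _).2 hy)
  have hold : ∀ w y u, w ≠ v → y ∈ D.in2 w → u ≠ v → φ' y u = φ y u := by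
    intro w y u hw hy hu
    rw [hφw _ _ hu, e1' _ _ (fun h' => hw (D.second_unique hy h'))]
  refine ⟨φ', R', ?_, ?_, ?_, ?_, ?_, ?_⟩
  · intro w hw
    by_cases hwv : w = v
    · subst hwv
      rw [hR'v, Finset.card_union_of_disjoint, hQc, hXc]
      rw [Finset.disjoint_right]
      exact fun c hc => (hXn c hc).2.2
    · rw [hR'w w hwv]; exact h.a w (hlt w hw hwv)
  · intro w hw y hy
    by_cases hwv : w = v
    · subst hwv
      rw [hR'v, hφv]
      exact Finset.mem_union_left _ (hψQ y hy)
    · rw [hR'w w hwv, hφw _ _ hwv]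
      exact e2 w (hlt w hw hwv) y hy
  · intro w hw y z hy hz hyz
    by_cases hwv : w = v
    · subst hwv
      rw [hφv, hφv] at hyz
      exact q2 ((D.hio _ _).2 hy) ((D.hio _ _).2 hz) hyz
    · rw [hφw _ _ hwv, hφw _ _ hwv] at hyz
      exact e3 w (hlt w hw hwv) y z hy hz hyz
  · intro w hw u hu
    rw [hT' u (hw.trans_lt (D.rk_lt _ _ hu))]
    by_cases hwv : w = v
    · subst hwv
      rw [hR'v, Finset.disjoint_left]
      exact fun c hc hc' => (hQX c hc).1 (hTΦ u hu hc')
    · rw [hR'w w hwv]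
      exact h.c w (hlt w hw hwv) u hu
  · intro w hw y hy
    have hrk := D.rk_h1 hy
    rw [hT' _ (hw.trans_lt hrk)]
    by_cases hwv : w = v
    · subst hwv
      rw [hφv, hTv, hφw _ _ (hne _ hrk)]
      refine ⟨q4 y hy, fun hc => ?_⟩
      rcases Finset.mem_union.1 hc with hc | hc
      · exact (hQX _ hc).1 (Finset.mem_union_right _ (Finset.mem_image_of_mem _ hy))
      · exact (e4 y hy).1 hc
    · rw [hT' _ (hlt w hw hwv), hold w y w hwv hy hwv,
        hold w y _ hwv hy (hne _ (hw.trans_lt hrk))]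
      exact h.d w (hlt w hw hwv) y hy
  · intro v0 hv0 j y hy hm
    have hv0v : v0 ≠ v := fun e => by rw [e] at hv0; exact lt_irrefl _ hv0
    have hrm := D.ref_max _ _ _ hy
    by_cases hyv : D.h1 y = v
    · by_cases hrv : D.h1 (D.ref v0 j) = v
      · right; right
        rw [hyv, hrv, hφv, hTv]
        refine ⟨Finset.mem_union_left _ (Finset.mem_union_left _
          (hψQ y (hyv ▸ D.h1_mem _ _ (D.B_out _ _ _ hy)))), fun z hz hlt' => ?_⟩
        have := D.ref_max _ _ _ hz
        rw [hrv] at this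
        omega
      · have hyin : y ∈ D.in1 v :=
          D.mem_in1.2 ⟨hyv ▸ D.h1_mem _ _ (D.B_out _ _ _ hy), hyv⟩
        have hq := q5 y hyin
        rw [hp y v0 j hy] at hq
        simp only [hy, if_true] at hq
        rw [hT' _ (hlt _ (hm.trans hrm) hrv), hyv, hφv]
        rcases hq with hq | hq | hq
        · exact Or.inl hq
        · refine Or.inr (Or.inl (hq.trans (Finset.card_le_card ?_)))
          intro c hc
          simp only [Finset.mem_inter, Finset.mem_sdiff, Finset.mem_union] at hc
          rw [Finset.mem_sdiff, hTv]
          refine ⟨hc.1, fun hc' => ?_⟩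
          rcases Finset.mem_union.1 hc' with hc' | hc'
          · exact hc.2.1.elim (hQX c hc').1 (hQX c hc').2
          · exact hc.2.2 hc'
        · refine Or.inr (Or.inr ⟨hq.1, fun z hz hlt' he => hq.2 ?_⟩)
          rw [← he, hold v0 z _ hv0v (D.B_in2 hz) (hne _ hlt')]
          exact Finset.mem_image_of_mem (fun z => φ z (D.h1 z))
            (Finset.mem_filter.2 ⟨hz, hlt'⟩)
    · have hl := hlt _ hm hyv
      have hq := h.e v0 (by omega) j y hy hl
      rw [hT' _ hl, hT' _ (hl.trans_le hrm), hold v0 y _ hv0v (D.B_in2 hy) hyv]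
      refine hq.imp_right (Or.imp_right (fun hq => ⟨hq.1, fun z hz hlt' => ?_⟩))
      rw [hold v0 z _ hv0v (D.B_in2 hz) (hne _ (hl.trans hlt'))]
      exact hq.2 z hz hlt'

theorem exists_inv [Fintype V] [Fintype C] [Nonempty C] (hN : Fintype.card C + g = 5 * Δ + 1)
    (hg : 4 * g ^ 2 + 1 ≤ Δ) : ∃ (φ : V → V → C) (R : V → Finset C), D.Inv 0 φ R := by
  have key : ∀ m, (∃ (φ : V → V → C) (R : V → Finset C), D.Inv m φ R) →
      ∃ (φ : V → V → C) (R : V → Finset C), D.Inv 0 φ R := by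
    intro m
    induction m with
    | zero => exact id
    | succ m ih =>
      rintro ⟨φ, R, h⟩
      exact ih (D.step hN hg m φ R h)
  obtain ⟨M, hM⟩ : ∃ M, ∀ v, D.rk v < M := by
    refine ⟨Finset.univ.sup D.rk + 1, fun v => ?_⟩
    exact Nat.lt_succ_of_le (Finset.le_sup (Finset.mem_univ v))
  have hno : ∀ v, ¬ M ≤ D.rk v := fun v => not_le.2 (hM v)
  exact key M ⟨fun _ _ => Classical.arbitrary C, fun _ => ∅,
    fun v hv => absurd hv (hno v), fun v hv => absurd hv (hno v), fun v hv => absurd hv (hno v),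
    fun v hv => absurd hv (hno v), fun v hv => absurd hv (hno v),
    fun v _ j y _ hv => absurd hv (hno _)⟩

end DG
end SCI

namespace SCI

lemma kblocks {V : Type*} [DecidableEq V] (g : ℕ) : ∀ (k : ℕ) (S : Finset V),
    k * (g + 1) ≤ S.card → ∃ B : ℕ → Finset V, (∀ j, B j ⊆ S) ∧ (∀ j < k, (B j).card = g + 1) ∧
      (∀ j, k ≤ j → B j = ∅) ∧ ∀ i j y, y ∈ B i → y ∈ B j → i = j := by
  intro k
  induction k with
  | zero =>
    intro S _
    exact ⟨fun _ => ∅, by simp, by simp, by simp, by simp⟩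
  | succ k ih =>
    intro S hS
    obtain ⟨W, hW, hWc⟩ := Finset.exists_subset_card_eq (s := S) (n := g + 1) (by
      have : g + 1 ≤ (k + 1) * (g + 1) := Nat.le_mul_of_pos_left _ (Nat.succ_pos _)
      omega)
    obtain ⟨B, b1, b2, b3, b4⟩ := ih (S \ W) (by
      rw [Finset.card_sdiff_of_subset hW, hWc]
      have : (k + 1) * (g + 1) = k * (g + 1) + (g + 1) := by ring
      omega)
    have hBW : ∀ j y, y ∈ B j → y ∉ W := fun j y hy => (Finset.mem_sdiff.1 (b1 j hy)).2
    refine ⟨fun j => if j = k then W else B j, ?_, ?_, ?_, ?_⟩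
    · intro j
      by_cases h : j = k
      · simpa [h] using hW
      · simp only [h, if_false]
        exact (b1 j).trans Finset.sdiff_subset
    · intro j hj
      by_cases h : j = k
      · simpa [h] using hWc
      · simp only [h, if_false]
        exact b2 j (by omega)
    · intro j hj
      have h : j ≠ k := by omega
      simp only [h, if_false]
      exact b3 j (by omega)
    · intro i j y hi hj
      by_cases h : i = k
      · by_cases h' : j = k
        · rw [h, h']
        · simp only [h, h', if_true, if_false] at hi hj
          exact absurd hi (hBW j y hj)
      · by_cases h' : j = k
        · simp only [h, h', if_true, if_false] at hi hj
          exact absurd hj (hBW i y hi)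
        · simp only [h, h', if_false] at hi hj
          exact b4 i j y hi hj

lemma blocks {V : Type*} [DecidableEq V] (g Δ : ℕ) (hg : 4 * g ^ 2 + 1 ≤ Δ) (S : Finset V) :
    ∃ B : ℕ → Finset V, (∀ j, B j ⊆ S) ∧ (∀ j, (B j).card ≤ g + 1) ∧
      (∀ i j y, y ∈ B i → y ∈ B j → i = j) ∧
      ∀ I ⊆ S, S.card + 1 ≤ I.card + g → Δ ≤ I.card + g + 1 → ∃ j, B j ⊆ I ∧
        (B j).card = g + 1 := by
  by_cases hS : g * (g + 1) ≤ S.card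
  · obtain ⟨B, b1, b2, b3, b4⟩ := kblocks g g S hS
    refine ⟨B, b1, ?_, b4, ?_⟩
    · intro j
      rcases lt_or_ge j g with h | h
      · exact (b2 j h).le
      · simp [b3 j h]
    · intro I hI h1 _
      by_contra hcon
      push Not at hcon
      have hx : ∀ j, ∃ x, j < g → x ∈ B j ∧ x ∉ I := by
        intro j
        by_cases hj : j < g
        · have := fun h => hcon j h (b2 j hj)
          obtain ⟨x, hx, hx'⟩ := Finset.not_subset.1 this
          exact ⟨x, fun _ => ⟨hx, hx'⟩⟩
        · rcases S.eq_empty_or_nonempty with rfl | ⟨x, _⟩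
          · have := Finset.card_le_card hI
            have hg0 : 0 < g := by omega
            have := b2 0 hg0
            have h0 := Finset.card_le_card (b1 0)
            simp only [Finset.card_empty] at h0
            omega
          · exact ⟨x, fun h => absurd h hj⟩
      choose x hx using hx
      have hc : (Finset.range g).card ≤ (S \ I).card := by
        refine Finset.card_le_card_of_injOn x ?_ ?_
        · intro j hj
          have hj' : j < g := by simpa using hj
          simp only [Finset.coe_sdiff, Set.mem_diff, Finset.mem_coe]
          exact ⟨b1 j (hx j hj').1, (hx j hj').2⟩
        · intro i hi j hj hij
          have hi' : i < g := by simpa using hi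
          have hj' : j < g := by simpa using hj
          exact b4 i j (x i) (hx i hi').1 (hij ▸ (hx j hj').1)
      rw [Finset.card_range, Finset.card_sdiff_of_subset hI] at hc
      have := Finset.card_le_card hI
      omega
  · refine ⟨fun _ => ∅, by simp, by simp, by simp, ?_⟩
    intro I hI h1 h2
    exfalso
    have := Finset.card_le_card hI
    have h3 : g ≤ g ^ 2 := Nat.le_self_pow (by norm_num) g
    have h4 : g * (g + 1) = g ^ 2 + g := by ring
    rcases Nat.eq_zero_or_pos g with h | h
    · subst h; omega
    · omega

lemma exists_rank {V : Type*} [Fintype V] [DecidableEq V] (G : SimpleGraph V) [DecidableRel G.Adj]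
    (hdeg : G.IsKDegenerate 2) (S : Finset V) : ∃ rk : V → ℕ, Set.InjOn rk (S : Set V) ∧
      ∀ v ∈ S, (S.filter (fun u => G.Adj v u ∧ rk v < rk u)).card ≤ 2 := by
  induction S using Finset.strongInduction with
  | H S ih =>
    rcases S.eq_empty_or_nonempty with rfl | hne
    · exact ⟨fun _ => 0, by simp, by simp⟩
    obtain ⟨v, hv, hc⟩ := hdeg S hne
    obtain ⟨rk, r1, r2⟩ := ih (S.erase v) (Finset.erase_ssubset hv)
    refine ⟨fun u => if u = v then 0 else rk u + 1, ?_, ?_⟩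
    · intro a ha b hb hab
      by_cases h1 : a = v
      · by_cases h2 : b = v
        · rw [h1, h2]
        · simp [h1, h2] at hab
      · by_cases h2 : b = v
        · simp [h1, h2] at hab
        · simp only [h1, h2, if_false] at hab
          exact r1 (by simp [h1]; exact ha) (by simp [h2]; exact hb) (by omega)
    · intro a ha
      by_cases h1 : a = v
      · subst h1
        refine le_trans (Finset.card_le_card ?_) hc
        intro x hx
        rw [Finset.mem_filter] at hx ⊢
        exact ⟨hx.1, hx.2.1⟩
      · refine le_trans (Finset.card_le_card ?_) (r2 a (Finset.mem_erase.2 ⟨h1, ha⟩))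
        intro x hx
        rw [Finset.mem_filter] at hx ⊢
        obtain ⟨hx1, hx2, hx3⟩ := hx
        by_cases h2 : x = v
        · simp [h2] at hx3
        · simp only [h1, h2, if_false] at hx3
          exact ⟨Finset.mem_erase.2 ⟨h2, hx1⟩, hx2, by omega⟩

lemma exists_DG {V : Type*} [Fintype V] [DecidableEq V] (G : SimpleGraph V) [DecidableRel G.Adj]
    (hdeg : G.IsKDegenerate 2) (g : ℕ) (hg : 4 * g ^ 2 + 1 ≤ G.maxDegree) :
    ∃ D : DG V G.maxDegree g, ∀ u w, G.Adj u w → w ∈ D.out u ∨ u ∈ D.out w := by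
  obtain ⟨rk, r1, r2⟩ := exists_rank G hdeg Finset.univ
  have rinj : ∀ u v, rk u = rk v → u = v := fun u v h => r1 (by simp) (by simp) h
  obtain ⟨inn, hinn⟩ : ∃ inn : V → Finset V, ∀ v y, y ∈ inn v ↔ G.Adj y v ∧ rk y < rk v :=
    ⟨fun v => Finset.univ.filter (fun y => G.Adj y v ∧ rk y < rk v), by simp⟩
  obtain ⟨out, hout⟩ : ∃ out : V → Finset V, ∀ y v, v ∈ out y ↔ G.Adj y v ∧ rk y < rk v :=
    ⟨fun y => Finset.univ.filter (fun v => G.Adj y v ∧ rk y < rk v), by simp⟩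
  have hh : ∀ y, ∃ h, ∀ v ∈ out y, h ∈ out y ∧ rk v ≤ rk h := by
    intro y
    rcases (out y).eq_empty_or_nonempty with h | h
    · exact ⟨y, by simp [h]⟩
    · obtain ⟨x, hx, hx'⟩ := Finset.exists_max_image (out y) rk h
      exact ⟨x, fun v hv => ⟨hx, hx' v hv⟩⟩
  choose h1 hh1 using hh
  have hB := fun v => blocks g G.maxDegree hg ((inn v).filter (fun y => h1 y ≠ v))
  choose B b1 b2 b3 b4 using hB
  have hr : ∀ v j, ∃ r, ∀ y ∈ B v j, r ∈ B v j ∧ rk (h1 y) ≤ rk (h1 r) := by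
    intro v j
    rcases (B v j).eq_empty_or_nonempty with h | h
    · exact ⟨v, by simp [h]⟩
    · obtain ⟨x, hx, hx'⟩ := Finset.exists_max_image (B v j) (fun y => rk (h1 y)) h
      exact ⟨x, fun v hv => ⟨hx, hx' v hv⟩⟩
  choose ref href using hr
  refine ⟨{ inn := inn, out := out, rk := rk, rk_inj := rinj, hio := ?_, rk_lt := ?_, out2 := ?_,
            deg := ?_, h1 := h1, h1_mem := ?_, h1_max := ?_, B := B, B_out := ?_, B_ne := ?_,
            B_card := b2, B_disj := b3, ref := ref, ref_mem := ?_, ref_max := ?_,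
            B_full := b4 }, ?_⟩
  · intro y v; rw [hinn, hout]
  · intro y v h; exact ((hout _ _).1 h).2
  · intro v
    refine le_trans (Finset.card_le_card ?_) (r2 v (Finset.mem_univ _))
    intro x hx
    rw [Finset.mem_filter]
    exact ⟨Finset.mem_univ _, (hout _ _).1 hx⟩
  · intro v
    refine le_trans ?_ (G.degree_le_maxDegree v)
    rw [← Finset.card_union_of_disjoint, ← G.card_neighborFinset_eq_degree]
    · refine Finset.card_le_card ?_
      intro x hx
      rw [SimpleGraph.mem_neighborFinset]
      rcases Finset.mem_union.1 hx with hx | hx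
      · exact ((hinn _ _).1 hx).1.symm
      · exact ((hout _ _).1 hx).1
    · rw [Finset.disjoint_left]
      intro x hx hx'
      have := ((hinn _ _).1 hx).2
      have := ((hout _ _).1 hx').2
      omega
  · intro y v h; exact (hh1 y v h).1
  · intro y v h; exact (hh1 y v h).2
  · intro v j y h
    have := (Finset.mem_filter.1 (b1 v j h)).1
    rw [hinn] at this
    exact (hout _ _).2 this
  · intro v j y h
    exact (Finset.mem_filter.1 (b1 v j h)).2
  · intro v j y h; exact (href v j y h).1
  · intro v j y h; exact (href v j y h).2
  · intro u w h
    rcases lt_trichotomy (rk u) (rk w) with h' | h' | h'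
    · exact Or.inl ((hout _ _).2 ⟨h, h'⟩)
    · exact absurd (rinj _ _ h') h.ne
    · exact Or.inr ((hout _ _).2 ⟨h.symm, h'⟩)

namespace DG

variable {V C : Type*} [DecidableEq V] [DecidableEq C] {Δ g : ℕ} (D : DG V Δ g)
  {φ : V → V → C} {R : V → Finset C}


lemma mem_T (h : D.Inv 0 φ R) {u w x : V} (hw : w ∈ D.out u) (hx : x = u ∨ x = w) :
    φ u w ∈ D.T φ R x := by
  unfold T
  rcases hx with rfl | rfl
  · exact Finset.mem_union_right _ (Finset.mem_image_of_mem _ hw)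
  · exact Finset.mem_union_left _ (h.b1 _ (Nat.zero_le _) _ hw)

lemma out_out (h : D.Inv 0 φ R) {u w y : V} (hw : w ∈ D.out u) (hy : y ∈ D.out u) (hne : w ≠ y) :
    φ u w ∉ D.T φ R y := by
  by_cases h1 : D.h1 u = y
  · have h2 : u ∈ D.in2 w := D.mem_in2.2 ⟨hw, fun e => hne (e.symm.trans h1)⟩
    have := (h.d w (Nat.zero_le _) u h2).1
    rwa [h1] at this
  · have h2 : u ∈ D.in2 y := D.mem_in2.2 ⟨hy, h1⟩
    have h3 : D.h1 u = w := by
      by_contra h3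
      exact hne (D.second_unique (D.mem_in2.2 ⟨hw, h3⟩) h2)
    have := (h.d y (Nat.zero_le _) u h2).2
    rwa [h3] at this

lemma share (h : D.Inv 0 φ R) {u w u' w' x : V} (hw : w ∈ D.out u) (hw' : w' ∈ D.out u')
    (hx : x = u ∨ x = w) (hx' : x = u' ∨ x = w') (he : φ u w = φ u' w') : u = u' ∧ w = w' := by
  rcases hx with rfl | rfl
  · rcases hx' with rfl | rfl
    · refine ⟨rfl, ?_⟩
      by_contra hne
      exact D.out_out h hw hw' hne (he ▸ D.mem_T h hw' (Or.inr rfl))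
    · exfalso
      exact Finset.disjoint_left.1 (h.c x (Nat.zero_le _) w hw)
        (he ▸ h.b1 x (Nat.zero_le _) u' hw') (D.mem_T h hw (Or.inr rfl))
  · rcases hx' with rfl | rfl
    · exfalso
      exact Finset.disjoint_left.1 (h.c x (Nat.zero_le _) w' hw')
        (he ▸ h.b1 x (Nat.zero_le _) u hw) (D.mem_T h hw' (Or.inr rfl))
    · exact ⟨h.b2 x (Nat.zero_le _) u u' hw hw' he, rfl⟩

lemma joined (h : D.Inv 0 φ R) {u w u' w' x y : V} (hw : w ∈ D.out u) (hw' : w' ∈ D.out u')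
    (hx : x = u ∨ x = w) (hy : y = u' ∨ y = w') (hxy : y ∈ D.out x) (he : φ u w = φ u' w') :
    u = u' ∧ w = w' := by
  have hT := D.mem_T h hw' hy
  rw [← he] at hT
  rcases hx with rfl | rfl
  · by_cases hwy : w = y
    · exact D.share h hw hw' (Or.inr hwy.symm) hy he
    · exact absurd hT (D.out_out h hw hxy hwy)
  · exact absurd hT (Finset.disjoint_left.1 (h.c x (Nat.zero_le _) y hxy)
      (h.b1 x (Nat.zero_le _) u hw))

end DG

lemma sci_le {V : Type*} [Fintype V] [DecidableEq V] (G : SimpleGraph V) [DecidableRel G.Adj]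
    (hdeg : G.IsKDegenerate 2) (g N : ℕ) (hg : 4 * g ^ 2 + 1 ≤ G.maxDegree)
    (hN : N + g = 5 * G.maxDegree + 1) : G.strongChromaticIndex ≤ N := by
  obtain ⟨D, hD⟩ := exists_DG G hdeg g hg
  have h3 : g ≤ g ^ 2 := Nat.le_self_pow (by norm_num) g
  haveI : Nonempty (Fin N) := ⟨⟨0, by omega⟩⟩
  obtain ⟨φ, R, h⟩ := D.exists_inv (C := Fin N) (by rw [Fintype.card_fin]; exact hN) hg
  have hE : ∀ e : G.edgeSet, ∃ p : V × V, (e : Sym2 V) = s(p.1, p.2) ∧ p.2 ∈ D.out p.1 := by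
    rintro ⟨e, he⟩
    induction e using Sym2.ind with
    | _ u w =>
      rcases hD u w he with h' | h'
      · exact ⟨(u, w), rfl, h'⟩
      · exact ⟨(w, u), Sym2.eq_swap, h'⟩
  choose p hp1 hp2 using hE
  apply Nat.sInf_le
  refine ⟨fun e => φ (p e).1 (p e).2, ?_⟩
  rintro e f hne ⟨x, hx, y, hy, hxy⟩ hef
  rw [hp1 e, Sym2.mem_iff] at hx
  rw [hp1 f, Sym2.mem_iff] at hy
  have key : (p e).1 = (p f).1 ∧ (p e).2 = (p f).2 := by
    rcases hxy with rfl | hxy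
    · exact D.share h (hp2 e) (hp2 f) hx hy hef
    · rcases hD x y hxy with h' | h'
      · exact D.joined h (hp2 e) (hp2 f) hx hy h' hef
      · obtain ⟨a, b⟩ := D.joined h (hp2 f) (hp2 e) hy hx h' hef.symm
        exact ⟨a.symm, b.symm⟩
  apply hne
  apply Subtype.ext
  rw [hp1 e, hp1 f, key.1, key.2]

end SCI

theorem strong_chromatic_index_two_degenerate {V : Type*} [Fintype V] [DecidableEq V]
    (G : SimpleGraph V) [DecidableRel G.Adj] (ε : ℝ) (hε0 : 0 < ε) (hε : ε ≤ 1 / 2)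
    (hdeg : G.IsKDegenerate 2)
    (hΔ : (4 : ℝ) ^ (1 / (2 * ε)) ≤ (G.maxDegree : ℝ)) :
    (G.strongChromaticIndex : ℝ) ≤
      5 * (G.maxDegree : ℝ) - (G.maxDegree : ℝ) ^ ((1 : ℝ) / 2 - ε) + 2 := by
  have hpos : (0 : ℝ) < (4 : ℝ) ^ (1 / (2 * ε)) := Real.rpow_pos_of_pos (by norm_num) _
  have hd : (0 : ℝ) < (G.maxDegree : ℝ) := hpos.trans_le hΔ
  have h2 : (2 : ℝ) ≤ (G.maxDegree : ℝ) ^ ε := by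
    have h := Real.rpow_le_rpow hpos.le hΔ hε0.le
    rw [← Real.rpow_mul (by norm_num)] at h
    have e1 : 1 / (2 * ε) * ε = 1 / 2 := by field_simp
    rw [e1, ← Real.sqrt_eq_rpow] at h
    have e2 : √(4 : ℝ) = 2 := by
      rw [show (4 : ℝ) = 2 ^ 2 by norm_num]
      exact Real.sqrt_sq (by norm_num)
    rwa [e2] at h
  set a : ℝ := (G.maxDegree : ℝ) ^ ((1 : ℝ) / 2 - ε) with ha
  have hapos : 0 < a := Real.rpow_pos_of_pos hd _
  have hmul : a * (G.maxDegree : ℝ) ^ ε = √(G.maxDegree : ℝ) := by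
    rw [ha, ← Real.rpow_add hd, Real.sqrt_eq_rpow]
    congr 1
    ring
  have h4 : 4 * a ^ 2 ≤ (G.maxDegree : ℝ) := by
    have h5 : 2 * a ≤ √(G.maxDegree : ℝ) := by rw [← hmul]; nlinarith
    have h6 := Real.sq_sqrt hd.le
    nlinarith
  have ht : 0 < ⌈a⌉₊ := Nat.ceil_pos.2 hapos
  obtain ⟨g, hg⟩ : ∃ g, ⌈a⌉₊ = g + 1 := ⟨⌈a⌉₊ - 1, by omega⟩
  have hg1 : (g : ℝ) < a := Nat.lt_ceil.1 (by omega)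
  have hg2 : a ≤ (g : ℝ) + 1 := by
    have := Nat.le_ceil a
    rw [hg] at this
    exact_mod_cast this
  have hg3 : 4 * g ^ 2 + 1 ≤ G.maxDegree := by
    have : (4 : ℝ) * (g : ℝ) ^ 2 < (G.maxDegree : ℝ) := by
      have : (0 : ℝ) ≤ g := Nat.cast_nonneg g
      nlinarith
    have : 4 * g ^ 2 < G.maxDegree := by exact_mod_cast this
    omega
  have h3 : g ≤ g ^ 2 := Nat.le_self_pow (by norm_num) g
  obtain ⟨N, hN⟩ : ∃ N, N + g = 5 * G.maxDegree + 1 := ⟨5 * G.maxDegree + 1 - g, by omega⟩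
  have hle := SCI.sci_le G hdeg g N hg3 hN
  have hle' : (G.strongChromaticIndex : ℝ) ≤ N := by exact_mod_cast hle
  have hN' : (N : ℝ) + g = 5 * (G.maxDegree : ℝ) + 1 := by exact_mod_cast hN
  linarith
end

section
/- If G is a finite simple k-degenerate graph with maximum degree Δ ≥ k, then the strong chromatic index of G satisfies χ'_s(G) ≤ (4k − 2)Δ − 2k² + 1. -/
open Classical

theorem aux_order {V : Type*} [Fintype V] [DecidableEq V]
    (G : SimpleGraph V) [DecidableRel G.Adj] (k : ℕ) (hdeg : G.IsKDegenerate k) :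
    ∀ n : ℕ, ∀ S : Finset V, S.card = n → ∃ f : V → ℕ, Set.InjOn f S ∧ (∀ v ∈ S, f v < n) ∧
      ∀ v ∈ S, (S.filter (fun w => G.Adj v w ∧ f w < f v)).card ≤ k := by
  intro n
  induction n with
  | zero =>
    intro S hS
    rw [Finset.card_eq_zero] at hS
    subst hS
    exact ⟨fun _ => 0, by simp, by simp, by simp⟩
  | succ n ih =>
    intro S hS
    obtain ⟨v, hv, hvk⟩ := hdeg S (Finset.card_pos.1 (by omega))
    obtain ⟨f, hf1, hf2, hf3⟩ := ih (S.erase v) (by rw [Finset.card_erase_of_mem hv]; omega)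
    have hlt : ∀ w ∈ S, w ≠ v → f w < n := fun w hw hne => hf2 w (Finset.mem_erase.2 ⟨hne, hw⟩)
    refine ⟨fun w => if w = v then n else f w, ?_, ?_, ?_⟩
    · intro a ha b hb hab
      simp only at hab
      have ha' : a ∈ S := ha
      have hb' : b ∈ S := hb
      by_cases h1 : a = v <;> by_cases h2 : b = v
      · rw [h1, h2]
      · have := hlt b hb' h2
        simp [h1, h2] at hab; omega
      · have := hlt a ha' h1
        simp [h1, h2] at hab; omega
      · simp [h1, h2] at hab
        exact hf1 (by simp [h1, ha']) (by simp [h2, hb']) hab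
    · intro w hw
      by_cases h1 : w = v
      · simp [h1]
      · have := hlt w hw h1
        simp [h1]; omega
    · intro w hw
      by_cases h1 : w = v
      · refine le_trans (Finset.card_le_card ?_) hvk
        intro z hz
        simp only [Finset.mem_filter] at hz ⊢
        subst h1
        exact ⟨hz.1, hz.2.1⟩
      · refine le_trans (Finset.card_le_card ?_) (hf3 w (Finset.mem_erase.2 ⟨h1, hw⟩))
        intro z hz
        have := hlt w hw h1
        simp only [Finset.mem_filter, Finset.mem_erase, h1, if_false] at hz ⊢
        by_cases h2 : z = v
        · simp [h2] at hz; omega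
        · simp [h2] at hz
          exact ⟨⟨h2, hz.1⟩, hz.2⟩

theorem aux_greedy {E : Type*} [Fintype E] [DecidableEq E] (R : E → E → Prop)
    (hR : ∀ e f, R e f → R f e) (g : E → ℕ) (N : ℕ)
    (h : ∀ e, (Finset.univ.filter (fun f => f ≠ e ∧ R e f ∧ g f ≤ g e)).card ≤ N)
    (S : Finset E) :
    ∃ C : E → Fin (N + 1), ∀ e ∈ S, ∀ f ∈ S, e ≠ f → R e f → C e ≠ C f := by
  induction S using Finset.induction_on_max_value g with
  | empty => exact ⟨fun _ => 0, by simp⟩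
  | insert a s ha hmax ih =>
    obtain ⟨C, hC⟩ := ih
    have hcard : ((Finset.univ.filter (fun f => f ≠ a ∧ R a f ∧ g f ≤ g a)).image C).card
        < (Finset.univ : Finset (Fin (N+1))).card := by
      refine lt_of_le_of_lt (Finset.card_image_le.trans (h a)) (by simp)
    obtain ⟨c, -, hc⟩ := Finset.exists_mem_notMem_of_card_lt_card hcard
    have key : ∀ f ∈ s, f ≠ a → R a f → C f ≠ c := by
      intro f hf hne hr hcc
      exact hc (Finset.mem_image.2 ⟨f, by simp [hne, hr, hmax f hf], hcc⟩)
    refine ⟨Function.update C a c, ?_⟩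
    intro e he f hf hne hr
    rw [Finset.mem_insert] at he hf
    by_cases h1 : e = a
    · subst h1
      have hf' : f ∈ s := hf.resolve_left (Ne.symm hne)
      rw [Function.update_self, Function.update_of_ne (Ne.symm hne)]
      exact (key f hf' (Ne.symm hne) hr).symm
    · have he' := he.resolve_left h1
      by_cases h2 : f = a
      · subst h2
        rw [Function.update_self, Function.update_of_ne hne]
        exact key e he' hne (hR _ _ hr)
      · rw [Function.update_of_ne h1, Function.update_of_ne h2]
        exact hC e he' f (hf.resolve_left h2) hne hr

theorem aux_star {V : Type*} [DecidableEq V] (A : Finset V) (B : V → Finset V) (m : ℕ)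
    (h : ∀ w ∈ A, (B w).card ≤ m) :
    (A.biUnion (fun w => (B w).image (fun z => s(w, z)))).card ≤ A.card * m :=
  Finset.card_biUnion_le_card_mul _ _ _ fun w hw => Finset.card_image_le.trans (h w hw)

theorem aux_count {V : Type*} [Fintype V] [DecidableEq V]
    (G : SimpleGraph V) [DecidableRel G.Adj] (k d : ℕ) (f : V → ℕ) (hf : Function.Injective f)
    (hk : k + 1 ≤ d + 1) (hd : ∀ v, (G.neighborFinset v).card ≤ d + 1)
    (hb : ∀ v, ((G.neighborFinset v).filter (fun w => f w < f v)).card ≤ k + 1)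
    (u v : V) (huv : G.Adj u v) (hlt : f u < f v) (T : Finset (Sym2 V))
    (hT : ∀ a b, s(a, b) ∈ T → G.Adj a b ∧ s(a, b) ≠ s(u, v) ∧ (f a ≤ f u ∨ f b ≤ f u) ∧
      ∃ x ∈ s(u, v), ∃ y ∈ s(a, b), x = y ∨ G.Adj x y) :
    T.card + 2 * (k + 1) ^ 2 ≤ (4 * k + 2) * (d + 1) := by
  set N := fun v => G.neighborFinset v with hN
  set D := fun v => (G.neighborFinset v).filter (fun w => f w < f v) with hD
  have mN : ∀ a b, b ∈ N a ↔ G.Adj a b := by intro a b; simp [hN]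
  have mD : ∀ a b, b ∈ D a ↔ G.Adj a b ∧ f b < f a := by intro a b; simp [hD]
  set A1 := ((N u).erase v).image (fun z => s(u, z)) with hA1
  set A2 := (D u).biUnion (fun w => ((N w).erase u).image (fun z => s(w, z))) with hA2
  set X := ((N u).erase v) \ D u with hX
  set A3 := X.biUnion (fun w => ((D w).erase u).image (fun z => s(w, z))) with hA3
  set A4 := ((D v).erase u).biUnion (fun w => (N w).image (fun z => s(w, z))) with hA4
  set Y := N v \ D v with hY
  set A6 := Y.biUnion (fun w => ((D w).erase v).image (fun z => s(w, z))) with hA6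
  have c1 : A1.card ≤ d := by
    refine Finset.card_image_le.trans ?_
    rw [Finset.card_erase_of_mem ((mN _ _).2 huv)]
    have := hd u
    simp only [hN]; omega
  have c2 : A2.card ≤ (D u).card * d := by
    refine aux_star _ _ _ fun w hw => ?_
    rw [Finset.card_erase_of_mem ((mN _ _).2 ((mD _ _).1 hw).1.symm)]
    have := hd w
    simp only [hN]; omega
  have c3 : A3.card ≤ X.card * k := by
    refine aux_star _ _ _ fun w hw => ?_
    simp only [hX, Finset.mem_sdiff, Finset.mem_erase, mN, mD, not_and, not_lt] at hw
    have h1 := hw.2 hw.1.2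
    have h2 : f u ≠ f w := fun h => hw.1.2.ne (hf h)
    rw [Finset.card_erase_of_mem ((mD _ _).2 ⟨hw.1.2.symm, by omega⟩)]
    have := hb w
    simp only [hD]; omega
  have c4 : A4.card ≤ ((D v).erase u).card * (d + 1) := aux_star _ _ _ fun w hw => hd w
  have c6 : A6.card ≤ Y.card * k := by
    refine aux_star _ _ _ fun w hw => ?_
    simp only [hY, Finset.mem_sdiff, mN, mD, not_and, not_lt] at hw
    have h1 := hw.2 hw.1
    have h2 : f v ≠ f w := fun h => hw.1.ne (hf h)
    rw [Finset.card_erase_of_mem ((mD _ _).2 ⟨hw.1.symm, by omega⟩)]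
    have := hb w
    simp only [hD]; omega
  have main : ∀ a b, G.Adj a b → s(a, b) ≠ s(u, v) → (f a ≤ f u ∨ f b ≤ f u) →
      ∀ x ∈ s(u, v), x = a ∨ G.Adj x a → s(a, b) ∈ A1 ∪ A2 ∪ A3 ∪ A4 ∪ A6 := by
    intro a b hab hne hle x hx hxa
    have i1 : ∀ z, G.Adj u z → z ≠ v → s(u, z) ∈ A1 ∪ A2 ∪ A3 ∪ A4 ∪ A6 := by
      intro z h1 h2
      have : s(u, z) ∈ A1 := Finset.mem_image_of_mem _ (Finset.mem_erase.2 ⟨h2, (mN _ _).2 h1⟩)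
      simp only [Finset.mem_union, this, true_or, or_true]
    have i2 : ∀ w z, w ∈ D u → z ∈ (N w).erase u → s(w, z) ∈ A1 ∪ A2 ∪ A3 ∪ A4 ∪ A6 := by
      intro w z h1 h2
      have : s(w, z) ∈ A2 := Finset.mem_biUnion.2 ⟨w, h1, Finset.mem_image_of_mem _ h2⟩
      simp only [Finset.mem_union, this, true_or, or_true]
    have i3 : ∀ w z, w ∈ X → z ∈ (D w).erase u → s(w, z) ∈ A1 ∪ A2 ∪ A3 ∪ A4 ∪ A6 := by
      intro w z h1 h2
      have : s(w, z) ∈ A3 := Finset.mem_biUnion.2 ⟨w, h1, Finset.mem_image_of_mem _ h2⟩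
      simp only [Finset.mem_union, this, true_or, or_true]
    have i4 : ∀ w z, w ∈ (D v).erase u → z ∈ N w → s(w, z) ∈ A1 ∪ A2 ∪ A3 ∪ A4 ∪ A6 := by
      intro w z h1 h2
      have : s(w, z) ∈ A4 := Finset.mem_biUnion.2 ⟨w, h1, Finset.mem_image_of_mem _ h2⟩
      simp only [Finset.mem_union, this, true_or, or_true]
    have i6 : ∀ w z, w ∈ Y → z ∈ (D w).erase v → s(w, z) ∈ A1 ∪ A2 ∪ A3 ∪ A4 ∪ A6 := by
      intro w z h1 h2
      have : s(w, z) ∈ A6 := Finset.mem_biUnion.2 ⟨w, h1, Finset.mem_image_of_mem _ h2⟩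
      simp only [Finset.mem_union, this, true_or, or_true]
    by_cases hau : a = u
    · subst hau
      exact i1 b hab (fun h => hne (by rw [h]))
    by_cases hbu : b = u
    · subst hbu
      rw [Sym2.eq_swap]
      exact i1 a hab.symm (fun h => hne (by rw [h, Sym2.eq_swap]))
    by_cases hav : a = v
    · subst hav
      rw [Sym2.eq_swap]
      refine i4 b a (Finset.mem_erase.2 ⟨hbu, (mD _ _).2 ⟨hab, by omega⟩⟩) ((mN _ _).2 hab.symm)
    rw [Sym2.mem_iff] at hx
    rcases hx with rfl | rfl
    · have hxa' := hxa.resolve_left (Ne.symm hau)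
      by_cases h : f a < f x
      · exact i2 a b ((mD _ _).2 ⟨hxa', h⟩) (Finset.mem_erase.2 ⟨hbu, (mN _ _).2 hab⟩)
      · have h2 : f a ≠ f x := fun h => hau (hf h)
        refine i3 a b ?_ (Finset.mem_erase.2 ⟨hbu, (mD _ _).2 ⟨hab, by omega⟩⟩)
        simp only [hX, Finset.mem_sdiff, Finset.mem_erase, mN, mD]
        exact ⟨⟨hav, hxa'⟩, fun h' => h h'.2⟩
    · have hxa' := hxa.resolve_left (Ne.symm hav)
      by_cases h : f a < f x
      · exact i4 a b (Finset.mem_erase.2 ⟨hau, (mD _ _).2 ⟨hxa', h⟩⟩) ((mN _ _).2 hab)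
      · refine i6 a b ?_ (Finset.mem_erase.2 ⟨?_, (mD _ _).2 ⟨hab, by omega⟩⟩)
        · simp only [hY, Finset.mem_sdiff, mN, mD]
          exact ⟨hxa', fun h' => h h'.2⟩
        · intro hbx
          subst hbx
          omega
  have hsub : T ⊆ A1 ∪ A2 ∪ A3 ∪ A4 ∪ A6 := by
    intro e
    induction e using Sym2.ind with
    | _ a b =>
      intro he
      obtain ⟨hab, hne, hle, x, hx, y, hy, hxy⟩ := hT a b he
      rw [Sym2.mem_iff] at hy
      rcases hy with rfl | rfl
      · exact main _ _ hab hne hle x hx hxy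
      · rw [Sym2.eq_swap]
        exact main _ _ hab.symm (by rwa [Sym2.eq_swap]) hle.symm x hx hxy
  have hc := Finset.card_le_card hsub
  have e1 := Finset.card_union_le (A1 ∪ A2 ∪ A3 ∪ A4) A6
  have e2 := Finset.card_union_le (A1 ∪ A2 ∪ A3) A4
  have e3 := Finset.card_union_le (A1 ∪ A2) A3
  have e4 := Finset.card_union_le A1 A2
  have q1 : (D u).card ≤ k + 1 := hb u
  have q2 : (D u).card + X.card ≤ d := by
    have hs : D u ⊆ (N u).erase v := by
      intro z hz
      rw [mD] at hz
      refine Finset.mem_erase.2 ⟨?_, (mN _ _).2 hz.1⟩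
      rintro rfl
      omega
    have h1 := Finset.card_sdiff_add_card_eq_card hs
    have h2 := Finset.card_erase_of_mem ((mN _ _).2 huv)
    have h3 : (N u).card ≤ d + 1 := hd u
    simp only [hX]; omega
  have huD : u ∈ D v := (mD _ _).2 ⟨huv.symm, hlt⟩
  have q3 := Finset.card_erase_add_one huD
  have q4 : (D v).card ≤ k + 1 := hb v
  have q5 : (D v).card + Y.card ≤ d + 1 := by
    have h1 := Finset.card_sdiff_add_card_eq_card (Finset.filter_subset (fun w => f w < f v) (N v))
    have h3 : (N v).card ≤ d + 1 := hd v
    have h4 : (D v).card = ((N v).filter (fun w => f w < f v)).card := rfl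
    have h5 : Y.card = (N v \ (N v).filter (fun w => f w < f v)).card := rfl
    omega
  generalize (D u).card = p at *
  generalize X.card = x at *
  generalize ((D v).erase u).card = q at *
  generalize Y.card = y at *
  have hq : q ≤ k := by omega
  have hqy : q + y ≤ d := by omega
  have hkd : k ≤ d := by omega
  have tot : T.card ≤ d + p * d + x * k + q * (d + 1) + y * k := by omega
  clear * - tot hq hqy hkd q1 q2
  zify at *
  nlinarith [mul_nonneg (sub_nonneg.2 hkd) (sub_nonneg.2 q1),
    mul_nonneg (Int.natCast_nonneg k) (sub_nonneg.2 q2),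
    mul_nonneg (sub_nonneg.2 hkd) (sub_nonneg.2 hq),
    mul_nonneg (Int.natCast_nonneg k) (sub_nonneg.2 hqy)]

theorem strong_chromatic_index_k_degenerate {V : Type*} [Fintype V] [DecidableEq V]
    (G : SimpleGraph V) [DecidableRel G.Adj] (k : ℕ) (hk : 0 < k)
    (hdeg : G.IsKDegenerate k) (hΔ : k ≤ G.maxDegree) :
    (G.strongChromaticIndex : ℤ) ≤
      (4 * (k : ℤ) - 2) * (G.maxDegree : ℤ) - 2 * (k : ℤ) ^ 2 + 1 := by
  obtain ⟨f, hf1, -, hf3⟩ := aux_order G k hdeg _ Finset.univ rfl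
  have hf : Function.Injective f := fun a b h => hf1 (by simp) (by simp) h
  obtain ⟨k, rfl⟩ : ∃ k', k = k' + 1 := ⟨k - 1, by omega⟩
  obtain ⟨d, hd⟩ : ∃ d, G.maxDegree = d + 1 := ⟨G.maxDegree - 1, by omega⟩
  rw [hd] at hΔ ⊢
  have hdv : ∀ v, (G.neighborFinset v).card ≤ d + 1 := fun v => by
    rw [← hd]; exact G.degree_le_maxDegree v
  have hb : ∀ v, ((G.neighborFinset v).filter (fun w => f w < f v)).card ≤ k + 1 := by
    intro v
    refine le_trans (Finset.card_le_card ?_) (hf3 v (by simp))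
    intro z hz
    simpa using hz
  let g : Sym2 V → ℕ := Sym2.lift ⟨fun a b => min (f a) (f b), fun a b => min_comm _ _⟩
  let R : G.edgeSet → G.edgeSet → Prop := fun e f =>
    ∃ x ∈ (e : Sym2 V), ∃ y ∈ (f : Sym2 V), x = y ∨ G.Adj x y
  have hR : ∀ e f, R e f → R f e := by
    rintro e f ⟨x, hx, y, hy, h⟩
    exact ⟨y, hy, x, hx, h.imp Eq.symm (fun h => h.symm)⟩
  have hbound : ∀ e : G.edgeSet, (Finset.univ.filter
      (fun e' : G.edgeSet => e' ≠ e ∧ R e e' ∧ g e' ≤ g e)).card + 2 * (k + 1) ^ 2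
        ≤ (4 * k + 2) * (d + 1) := by
    rintro ⟨e, he⟩
    obtain ⟨u, v, hlt, rfl⟩ : ∃ u v, f u < f v ∧ e = s(u, v) := by
      induction e using Sym2.ind with
      | _ a b =>
        have hab : G.Adj a b := he
        rcases lt_trichotomy (f a) (f b) with h | h | h
        · exact ⟨a, b, h, rfl⟩
        · exact absurd (hf h) hab.ne
        · exact ⟨b, a, h, Sym2.eq_swap⟩
    have huv : G.Adj u v := he
    rw [← Finset.card_map (Function.Embedding.subtype _)]
    refine aux_count G k d f hf hΔ hdv hb u v huv hlt _ ?_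
    intro a b hab
    simp only [Finset.mem_map, Finset.mem_filter, Finset.mem_univ, true_and] at hab
    obtain ⟨⟨e', he'⟩, ⟨h1, h2, h3⟩, h4⟩ := hab
    have h4' : e' = s(a, b) := h4
    subst h4'
    refine ⟨he', fun h => h1 (Subtype.ext h), ?_, h2⟩
    have h3' : min (f a) (f b) ≤ min (f u) (f v) := h3
    omega
  have hN : ∃ N, N + 2 * (k + 1) ^ 2 = (4 * k + 2) * (d + 1) := by
    refine ⟨(4 * k + 2) * (d + 1) - 2 * (k + 1) ^ 2, Nat.sub_add_cancel ?_⟩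
    nlinarith [Nat.mul_le_mul_left (4 * k + 2) hΔ]
  obtain ⟨N, hN⟩ := hN
  obtain ⟨C, hC⟩ := aux_greedy R hR (fun e => g e) N
    (fun e => by
      have h0 := hbound e
      rw [← hN] at h0
      have h1 := Nat.le_of_add_le_add_right h0
      convert h1) Finset.univ
  have hle : G.strongChromaticIndex ≤ N + 1 :=
    Nat.sInf_le ⟨C, fun e f hne h => hC e (by simp) f (by simp) hne h⟩
  zify at hle hN
  push_cast
  nlinarith
end

section
/- If G is a finite simple 2-degenerate graph with maximum degree Δ ≥ 2, then the strong chromatic index of G satisfies χ'_s(G) ≤ 6Δ − 7. -/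
open Classical

namespace SCI

noncomputable def nb {V : Type*} [Fintype V] (H : SimpleGraph V) (x : V) : Finset V :=
  Finset.univ.filter (H.Adj x)

lemma mem_nb {V : Type*} [Fintype V] (H : SimpleGraph V) (x y : V) : y ∈ nb H x ↔ H.Adj x y := by
  simp [nb]

lemma nb_mono {V : Type*} [Fintype V] {H K : SimpleGraph V} (h : H ≤ K) (x : V) :
    nb H x ⊆ nb K x := by
  intro y hy
  rw [mem_nb] at *
  exact h hy

def Conf {V : Type*} (G : SimpleGraph V) (e f : Sym2 V) : Prop :=
  ∃ x ∈ e, ∃ y ∈ f, x = y ∨ G.Adj x y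

lemma Conf.symm {V : Type*} {G : SimpleGraph V} {e f : Sym2 V} (h : Conf G e f) : Conf G f e := by
  obtain ⟨x, hx, y, hy, h⟩ := h
  exact ⟨y, hy, x, hx, h.imp Eq.symm (fun h => h.symm)⟩

def Inv {V : Type*} [Fintype V] (G H : SimpleGraph V) : Prop :=
  ∀ u, ∃ B : Finset V, nb H u ⊆ B ∧ (B ⊆ nb H u ∨ B.card ≤ 2) ∧
    ∀ x, G.Adj u x → x ∉ B → (nb H x).card ≤ 1

lemma sum_bound {V : Type*} (N : Finset V) (d : V → ℕ) (a D t : ℕ) (haD : a ≤ D)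
    (hD : ∀ z ∈ N, d z ≤ D) (ht : (N.filter (fun z => a < d z)).card ≤ t) :
    ∑ z ∈ N, d z ≤ a * N.card + t * (D - a) := by
  calc ∑ z ∈ N, d z ≤ ∑ z ∈ N, (a + if a < d z then D - a else 0) := by
        apply Finset.sum_le_sum
        intro z hz
        have := hD z hz
        split_ifs <;> omega
    _ = a * N.card + (N.filter (fun z => a < d z)).card * (D - a) := by
        rw [Finset.sum_add_distrib, ← Finset.sum_filter]
        simp [mul_comm]
    _ ≤ _ := by gcongr

lemma exists_edge {V : Type*} [Fintype V] (G H : SimpleGraph V) (hHG : H ≤ G)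
    (hdeg : ∀ S : Finset V, S.Nonempty → ∃ v ∈ S, (S.filter (G.Adj v)).card ≤ 2)
    (hH : ∃ a b, H.Adj a b) :
    ∃ v w, H.Adj v w ∧ (nb H v).card ≤ 2 ∧
      ((nb H w).filter (fun z => 2 < (nb H z).card)).card ≤ 2 := by
  set S : Finset V := Finset.univ.filter (fun z => 2 < (nb H z).card) with hS
  by_cases hne : S.Nonempty
  · obtain ⟨w, hw, hc⟩ := hdeg S hne
    have hsub : (nb H w).filter (fun z => 2 < (nb H z).card) ⊆ S.filter (G.Adj w) := by
      intro z hz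
      simp only [Finset.mem_filter, mem_nb, hS, Finset.mem_univ, true_and] at *
      exact ⟨hz.2, hHG hz.1⟩
    have h2 := (Finset.card_le_card hsub).trans hc
    have hw2 : 2 < (nb H w).card := by simpa [hS] using hw
    have : ∃ v ∈ nb H w, ¬ (2 < (nb H v).card) := by
      by_contra! hcon
      rw [Finset.filter_true_of_mem hcon] at h2
      omega
    obtain ⟨v, hv, hv2⟩ := this
    rw [mem_nb] at hv
    exact ⟨v, w, hv.symm, by omega, h2⟩
  · rw [Finset.not_nonempty_iff_eq_empty] at hne
    have hall : ∀ z, (nb H z).card ≤ 2 := by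
      intro z
      by_contra hz
      have : z ∈ S := by simp [hS]; omega
      simp [hne] at this
    obtain ⟨a, b, hab⟩ := hH
    exact ⟨a, b, hab, hall a, (Finset.card_filter_le _ _).trans (hall b)⟩

noncomputable def E {V : Type*} [Fintype V] (H : SimpleGraph V) (z : V) : Finset (Sym2 V) :=
  (nb H z).image (fun y => s(z, y))

lemma mem_E {V : Type*} [Fintype V] (H : SimpleGraph V) (z : V) (f : Sym2 V)
    (hf : f ∈ H.edgeSet) (hz : z ∈ f) : f ∈ E H z := by
  obtain ⟨y, rfl⟩ := hz
  exact Finset.mem_image.2 ⟨y, (mem_nb _ _ _).2 hf, rfl⟩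

/-- an edge touching a neighbour of v, or v itself -/
lemma touch {V : Type*} [Fintype V] (G H : SimpleGraph V) (hHG : H ≤ G) (v w : V)
    (f : Sym2 V) (hf : f ∈ H.edgeSet) (hne : f ≠ s(v, w)) (y : V) (hy : y ∈ f)
    (h : v = y ∨ G.Adj v y) :
    f ∈ ((nb G v).erase w).biUnion (E H) ∪ ((nb G w).erase v).biUnion (E H) := by
  simp only [Finset.mem_union, Finset.mem_biUnion, Finset.mem_erase, mem_nb]
  rcases h with rfl | h
  · obtain ⟨z, rfl⟩ := hy
    refine Or.inl ⟨z, ⟨?_, hHG hf⟩, mem_E _ _ _ hf (by simp)⟩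
    rintro rfl
    exact hne rfl
  · by_cases hyw : y = w
    · subst hyw
      obtain ⟨z, rfl⟩ := hy
      refine Or.inr ⟨z, ⟨?_, hHG hf⟩, mem_E _ _ _ hf (by simp)⟩
      rintro rfl
      exact hne Sym2.eq_swap
    · exact Or.inl ⟨y, ⟨hyw, h⟩, mem_E _ _ _ hf hy⟩

lemma card_conf {V : Type*} [Fintype V] (G H : SimpleGraph V) (hHG : H ≤ G) (Δ : ℕ)
    (hΔ2 : 2 ≤ Δ) (hΔ : ∀ x, (nb G x).card ≤ Δ) (hI : Inv G H) (v w : V) (hvw : H.Adj v w)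
    (hv : (nb H v).card ≤ 2)
    (hw : ((nb H w).filter (fun z => 2 < (nb H z).card)).card ≤ 2) :
    (Finset.univ.filter (fun f => f ∈ H.edgeSet ∧ f ≠ s(v, w) ∧ Conf G s(v, w) f)).card
      < 6 * Δ - 7 := by
  have hsub : Finset.univ.filter (fun f => f ∈ H.edgeSet ∧ f ≠ s(v, w) ∧ Conf G s(v, w) f) ⊆
      ((nb G v).erase w).biUnion (E H) ∪ ((nb G w).erase v).biUnion (E H) := by
    intro f hf
    simp only [Finset.mem_filter, Finset.mem_univ, true_and] at hf
    obtain ⟨hf, hne, x, hx, y, hy, h⟩ := hf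
    rw [Sym2.mem_iff] at hx
    rcases hx with rfl | rfl
    · exact touch G H hHG _ _ f hf hne y hy h
    · rw [Finset.union_comm]
      exact touch G H hHG _ _ f hf (by rwa [Sym2.eq_swap]) y hy h
  have hE : ∀ N : Finset V, (N.biUnion (E H)).card ≤ ∑ z ∈ N, (nb H z).card := fun N =>
    Finset.card_biUnion_le.trans (Finset.sum_le_sum fun z _ => Finset.card_image_le)
  have hD : ∀ z, (nb H z).card ≤ Δ := fun z => (Finset.card_le_card (nb_mono hHG z)).trans (hΔ z)
  have hmv : w ∈ nb G v := (mem_nb _ _ _).2 (hHG hvw)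
  have hmw : v ∈ nb G w := (mem_nb _ _ _).2 (hHG hvw.symm)
  have cv : ((nb G v).erase w).card ≤ Δ - 1 := by
    rw [Finset.card_erase_of_mem hmv]; have := hΔ v; omega
  have cw : ((nb G w).erase v).card ≤ Δ - 1 := by
    rw [Finset.card_erase_of_mem hmw]; have := hΔ w; omega
  have h1 := sum_bound ((nb G v).erase w) (fun z => (nb H z).card) 1 Δ 1 (by omega)
    (fun z _ => hD z) (by
      obtain ⟨B, hB1, hB2, hB3⟩ := hI v
      have hBc : B.card ≤ 2 := hB2.elim (fun h => (Finset.card_le_card h).trans hv) id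
      have hwB : w ∈ B := hB1 ((mem_nb _ _ _).2 hvw)
      have : ((nb G v).erase w).filter (fun z => 1 < (nb H z).card) ⊆ B.erase w := by
        intro z hz
        simp only [Finset.mem_filter, Finset.mem_erase, mem_nb] at *
        refine ⟨hz.1.1, ?_⟩
        by_contra hzB
        have := hB3 z hz.1.2 hzB
        omega
      have := Finset.card_le_card this
      rw [Finset.card_erase_of_mem hwB] at this
      omega)
  have h2 := sum_bound ((nb G w).erase v) (fun z => (nb H z).card) 2 Δ 2 hΔ2
    (fun z _ => hD z) (by
      obtain ⟨B, hB1, hB2, hB3⟩ := hI w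
      have hs : ((nb G w).erase v).filter (fun z => 2 < (nb H z).card) ⊆
          B.filter (fun z => 2 < (nb H z).card) := by
        intro z hz
        simp only [Finset.mem_filter, Finset.mem_erase, mem_nb] at *
        refine ⟨?_, hz.2⟩
        by_contra hzB
        have := hB3 z hz.1.2 hzB
        omega
      refine (Finset.card_le_card hs).trans ?_
      rcases hB2 with h | h
      · exact (Finset.card_le_card (Finset.filter_subset_filter _ h)).trans hw
      · exact (Finset.card_filter_le _ _).trans h)
  have h3 := (Finset.card_le_card hsub).trans (Finset.card_union_le _ _)
  have h4 := hE ((nb G v).erase w)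
  have h5 := hE ((nb G w).erase v)
  omega

lemma main {V : Type*} [Fintype V] (G : SimpleGraph V) (Δ : ℕ)
    (hΔ2 : 2 ≤ Δ) (hΔ : ∀ x, (nb G x).card ≤ Δ)
    (hdeg : ∀ S : Finset V, S.Nonempty → ∃ v ∈ S, (S.filter (G.Adj v)).card ≤ 2)
    (H : SimpleGraph V) : H ≤ G → Inv G H → ∃ c : Sym2 V → Fin (6 * Δ - 7),
      ∀ e ∈ H.edgeSet, ∀ f ∈ H.edgeSet, e ≠ f → Conf G e f → c e ≠ c f := by
  induction H using WellFoundedLT.induction with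
  | ind H ih =>
  intro hHG hI
  by_cases hH : ∃ a b, H.Adj a b
  · obtain ⟨v, w, hvw, hv, hw⟩ := exists_edge G H hHG hdeg hH
    have hle : H.deleteEdges {s(v, w)} ≤ H := SimpleGraph.deleteEdges_le _
    have hlt : H.deleteEdges {s(v, w)} < H := by
      refine lt_of_le_of_ne hle ?_
      intro h
      rw [← h] at hvw
      simp at hvw
    have hmono : ∀ x, (nb (H.deleteEdges {s(v, w)}) x).card ≤ (nb H x).card := fun x =>
      Finset.card_le_card (nb_mono hle x)
    have hI' : Inv G (H.deleteEdges {s(v, w)}) := by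
      intro u
      obtain ⟨B, hB1, hB2, hB3⟩ := hI u
      by_cases hc : B.card ≤ 2
      · exact ⟨B, (nb_mono hle u).trans hB1, Or.inr hc, fun x h1 h2 => (hmono x).trans (hB3 x h1 h2)⟩
      · have hB2 := hB2.resolve_right hc
        have hBe := hB2.antisymm hB1
        refine ⟨nb (H.deleteEdges {s(v, w)}) u, subset_rfl, Or.inl subset_rfl, ?_⟩
        intro x hx hxn
        by_cases hxB : x ∈ B
        · rw [hBe, mem_nb] at hxB
          rw [mem_nb, SimpleGraph.deleteEdges_adj] at hxn
          have heq : s(u, x) = s(v, w) := by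
            by_contra hne
            exact hxn ⟨hxB, hne⟩
          have huv : u ≠ v := by
            rintro rfl
            rw [hBe] at hc
            exact hc hv
          have hxv : x = v := by
            rw [Sym2.eq_iff] at heq
            rcases heq with h | h
            · exact absurd h.1 huv
            · exact h.2
          have huw : u = w := by
            rw [Sym2.eq_iff] at heq
            rcases heq with h | h
            · exact absurd h.1 huv
            · exact h.1
          subst hxv huw
          have : nb (H.deleteEdges {s(x, u)}) x ⊆ (nb H x).erase u := by
            intro z hz
            rw [mem_nb, SimpleGraph.deleteEdges_adj] at hz
            rw [Finset.mem_erase, mem_nb]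
            refine ⟨?_, hz.1⟩
            rintro rfl
            exact hz.2 rfl
          have := Finset.card_le_card this
          rw [Finset.card_erase_of_mem ((mem_nb _ _ _).2 hvw)] at this
          omega
        · exact (hmono x).trans (hB3 x hx hxB)
    obtain ⟨c, hc⟩ := ih _ hlt (hle.trans hHG) hI'
    have hcard := card_conf G H hHG Δ hΔ2 hΔ hI v w hvw hv hw
    set F := Finset.univ.filter (fun f => f ∈ H.edgeSet ∧ f ≠ s(v, w) ∧ Conf G s(v, w) f) with hF
    have : ∃ col, col ∉ F.image c := by
      by_contra! hcon
      have h1 : F.image c = Finset.univ := Finset.eq_univ_iff_forall.2 hcon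
      have h2 : (F.image c).card ≤ F.card := Finset.card_image_le
      rw [h1, Finset.card_univ, Fintype.card_fin] at h2
      omega
    obtain ⟨col, hcol⟩ := this
    have hfree : ∀ f ∈ H.edgeSet, f ≠ s(v, w) → Conf G s(v, w) f → c f ≠ col := by
      intro f hf hne hcf heq
      have hfF : f ∈ F := by
        simp only [hF, Finset.mem_filter, Finset.mem_univ, true_and]
        exact ⟨hf, hne, hcf⟩
      exact hcol (Finset.mem_image.2 ⟨f, hfF, heq⟩)
    refine ⟨Function.update c s(v, w) col, ?_⟩
    intro e he f hf hne hcf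
    by_cases h1 : e = s(v, w)
    · subst h1
      rw [Function.update_self, Function.update_of_ne hne.symm]
      exact (hfree f hf hne.symm hcf).symm
    · by_cases h2 : f = s(v, w)
      · subst h2
        rw [Function.update_self, Function.update_of_ne hne]
        exact hfree e he hne hcf.symm
      · rw [Function.update_of_ne h1, Function.update_of_ne h2]
        apply hc _ _ _ _ hne hcf
        · rw [SimpleGraph.edgeSet_deleteEdges]; exact ⟨he, h1⟩
        · rw [SimpleGraph.edgeSet_deleteEdges]; exact ⟨hf, h2⟩
  · refine ⟨fun _ => ⟨0, by omega⟩, ?_⟩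
    intro e he
    induction e with
    | h a b => exact absurd ⟨a, b, he⟩ hH

end SCI

theorem strong_chromatic_index_two_degenerate_six {V : Type*} [Fintype V] [DecidableEq V]
    (G : SimpleGraph V) [DecidableRel G.Adj]
    (hdeg : G.IsKDegenerate 2) (hΔ : 2 ≤ G.maxDegree) :
    (G.strongChromaticIndex : ℤ) ≤ 6 * (G.maxDegree : ℤ) - 7 := by
  have hd : ∀ x, (SCI.nb G x).card ≤ G.maxDegree := by
    intro x
    refine le_trans (le_of_eq ?_) (G.degree_le_maxDegree x)
    rw [← SimpleGraph.card_neighborFinset_eq_degree]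
    congr 1
    ext y
    simp [SCI.mem_nb]
  have hk : ∀ S : Finset V, S.Nonempty → ∃ v ∈ S, (S.filter (G.Adj v)).card ≤ 2 := by
    intro S hS
    obtain ⟨v, hv, h⟩ := hdeg S hS
    refine ⟨v, hv, ?_⟩
    convert h
  have hI : SCI.Inv G G := fun u => ⟨SCI.nb G u, subset_rfl, Or.inl subset_rfl,
    fun x hx hn => absurd ((SCI.mem_nb _ _ _).2 hx) hn⟩
  obtain ⟨c, hc⟩ := SCI.main G G.maxDegree hΔ hd (by convert hk) G le_rfl hI
  have : G.strongChromaticIndex ≤ 6 * G.maxDegree - 7 := by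
    apply Nat.sInf_le
    refine ⟨fun e => c e, ?_⟩
    intro e f hne h
    exact hc e e.2 f f.2 (fun h => hne (Subtype.ext h)) h
  omega
end

section
/- Every finite simple 2-degenerate graph G that contains a vertex of degree at least 3 contains a vertex u of degree at least 3 such that u has at most two neighbors of degree more than 2; that is, G contains a special vertex of degree at least 3. -/
open Classical

theorem exists_special_vertex_of_two_degenerate {V : Type*} [Fintype V] [DecidableEq V]
    (G : SimpleGraph V) [DecidableRel G.Adj]
    (hdeg : G.IsKDegenerate 2) (h : ∃ v : V, 3 ≤ G.degree v) :
    ∃ u : V, 3 ≤ G.degree u ∧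
      ((G.neighborFinset u).filter fun x => 2 < G.degree x).card ≤ 2 := by
  obtain ⟨w, hw⟩ := h
  obtain ⟨u, hu, hc⟩ := hdeg (Finset.univ.filter fun x => 3 ≤ G.degree x)
    ⟨w, by simpa using hw⟩
  refine ⟨u, by simpa using hu, le_trans (Finset.card_le_card ?_) hc⟩
  intro x hx
  simp only [Finset.mem_filter, SimpleGraph.mem_neighborFinset, Finset.mem_univ, true_and] at hx ⊢
  exact ⟨hx.2, hx.1⟩
end

section
/- Let G be a finite simple graph, let u be a vertex of G with d(u) ≥ 3 that has two neighbors u₁ and u₂ such that every neighbor of u other than u₁ and u₂ has degree exactly 2 in G. Let v be a neighbor of u of degree 2 with v ∉ {u₁, u₂}, let w be the neighbor of v other than u, and let t be the number of common neighbors of u and w that have degree exactly 2 in G. Let N₂(uv) denote the set of edges xy of G, other than uv itself, such that x or y is adjacent to u or to v. Then |N₂(uv)| ≤ d(u₁) + d(u₂) + d(w) + 2·d(u) − 5 − t. -/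
open Classical

theorem card_strong_neighborhood_edges_le {V : Type*} [Fintype V] [DecidableEq V]
    (G : SimpleGraph V) [DecidableRel G.Adj] (u u₁ u₂ v w : V)
    (hdu : 3 ≤ G.degree u)
    (hu₁ : G.Adj u u₁) (hu₂ : G.Adj u u₂) (hu₁u₂ : u₁ ≠ u₂)
    (hother : ∀ x, G.Adj u x → x ≠ u₁ → x ≠ u₂ → G.degree x = 2)
    (hv : G.Adj u v) (hdv : G.degree v = 2) (hvu₁ : v ≠ u₁) (hvu₂ : v ≠ u₂)
    (hw : G.Adj v w) (hwu : w ≠ u)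
    (t : ℕ)
    (ht : t = ((G.neighborFinset u ∩ G.neighborFinset w).filter
      fun x => G.degree x = 2).card) :
    ((G.edgeFinset.filter fun e =>
        e ≠ s(u, v) ∧ ∃ x ∈ e, G.Adj x u ∨ G.Adj x v).card : ℤ) ≤
      (G.degree u₁ : ℤ) + G.degree u₂ + G.degree w + 2 * G.degree u - 5 - t := by
  set T := (G.neighborFinset u ∩ G.neighborFinset w).filter fun x => G.degree x = 2 with hT
  have hTm : ∀ x ∈ T, G.Adj u x ∧ G.Adj w x := by
    intro x hx
    simp only [hT, Finset.mem_filter, Finset.mem_inter, SimpleGraph.mem_neighborFinset] at hx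
    exact hx.1
  have hNv : ∀ x, G.Adj x v → x = u ∨ x = w := by
    intro x hx
    have h1 : ({u, w} : Finset V) = G.neighborFinset v := by
      apply Finset.eq_of_subset_of_card_le
      · intro y hy
        simp only [Finset.mem_insert, Finset.mem_singleton] at hy
        rw [SimpleGraph.mem_neighborFinset]
        rcases hy with rfl | rfl
        · exact hv.symm
        · exact hw
      · rw [SimpleGraph.card_neighborFinset_eq_degree, hdv, Finset.card_pair hwu.symm]
    have h2 : x ∈ G.neighborFinset v := by
      rw [SimpleGraph.mem_neighborFinset]; exact hx.symm
    rw [← h1] at h2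
    simpa using h2
  set I := T.image (fun x => s(w, x)) with hI
  have hIc : I.card = t := by
    rw [ht, hI, Finset.card_image_of_injective]
    intro a b hab
    have h3 : a = b ∨ w = b ∧ a = w := by simpa using hab
    rcases h3 with h3 | h3
    · exact h3
    · exact h3.2.trans h3.1
  have hIs : I ⊆ G.incidenceFinset w := by
    intro e he
    rw [hI, Finset.mem_image] at he
    obtain ⟨x, hx, rfl⟩ := he
    rw [SimpleGraph.mem_incidenceFinset]
    exact ⟨(hTm x hx).2, by simp⟩
  set B := (G.neighborFinset u).biUnion (fun x => G.incidenceFinset x) with hB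
  have hBm : ∀ e ∈ G.edgeSet, ∀ x ∈ e, G.Adj u x → e ∈ B := by
    intro e he x hx hux
    rw [hB, Finset.mem_biUnion]
    refine ⟨x, by simpa using hux, ?_⟩
    rw [SimpleGraph.mem_incidenceFinset]
    exact ⟨he, hx⟩
  set E := G.edgeFinset.filter fun e =>
        e ≠ s(u, v) ∧ ∃ x ∈ e, G.Adj x u ∨ G.Adj x v with hE
  have hsub : insert s(u, v) E ⊆ B ∪ (G.incidenceFinset w \ I) := by
    intro e he
    rw [Finset.mem_insert] at he
    rw [Finset.mem_union]
    rcases he with rfl | he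
    · exact Or.inl (hBm _ hv v (by simp) hv)
    · rw [hE, Finset.mem_filter, SimpleGraph.mem_edgeFinset] at he
      obtain ⟨heG, -, x, hx, h | h⟩ := he
      · exact Or.inl (hBm _ heG x hx h.symm)
      · rcases hNv x h with rfl | rfl
        · obtain ⟨y, rfl⟩ := hx
          exact Or.inl (hBm _ heG y (by simp) heG)
        · by_cases heI : e ∈ I
          · left
            rw [hI, Finset.mem_image] at heI
            obtain ⟨y, hy, rfl⟩ := heI
            exact hBm _ heG y (by simp) (hTm y hy).1
          · right
            rw [Finset.mem_sdiff, SimpleGraph.mem_incidenceFinset]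
            exact ⟨⟨heG, hx⟩, heI⟩
  have hc := Finset.card_le_card hsub
  rw [Finset.card_insert_of_notMem (by simp [hE])] at hc
  have hc2 := Finset.card_union_le B (G.incidenceFinset w \ I)
  have hc3 := Finset.card_sdiff_add_card_eq_card hIs
  rw [hIc, SimpleGraph.card_incidenceFinset_eq_degree] at hc3
  have hc4 : B.card ≤ ∑ x ∈ G.neighborFinset u, G.degree x := by
    refine Finset.card_biUnion_le.trans (le_of_eq ?_)
    exact Finset.sum_congr rfl fun x _ => SimpleGraph.card_incidenceFinset_eq_degree G x
  have hps : ({u₁, u₂} : Finset V) ⊆ G.neighborFinset u := by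
    intro y hy
    simp only [Finset.mem_insert, Finset.mem_singleton] at hy
    rw [SimpleGraph.mem_neighborFinset]
    rcases hy with rfl | rfl <;> assumption
  have hs := Finset.sum_sdiff (f := fun x => G.degree x) hps
  have hs2 : ∑ x ∈ G.neighborFinset u \ {u₁, u₂}, G.degree x
      = (G.neighborFinset u \ {u₁, u₂}).card * 2 := by
    apply Finset.sum_const_nat
    intro x hx
    simp only [Finset.mem_sdiff, SimpleGraph.mem_neighborFinset, Finset.mem_insert,
      Finset.mem_singleton, not_or] at hx
    exact hother x hx.1 hx.2.1 hx.2.2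
  have hc5 := Finset.card_sdiff_add_card_eq_card hps
  rw [Finset.card_pair hu₁u₂, SimpleGraph.card_neighborFinset_eq_degree] at hc5
  rw [Finset.sum_pair hu₁u₂, hs2] at hs
  omega
end
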